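/- arXiv:2509.08425 — 2 statements merged into one kernel-verified Lean document; each statement's English description precedes it below -/
import Mathlib

section
/- Let p ≥ 1 be real, let α, β, γ ∈ (0,1) with α + β + γ = 1, and let P_XY ∈ P_n(X_n × Y_n) be a joint type whose marginals satisfy E_{P_X}[|X|^p] ≤ c_X and E_{P_Y}[|Y|^p] ≤ c_Y. Then, with c₁ = [ (3√π/2)( 2^{max{0, 1/2 − 1/p}} (c_X + c_Y)^{1/p} + 1/√6 ) ]^{2p/(2+p)}, c₂ = (4 c_X^{1/p} + 1)^{p/(1+p)}, c₃ = (4 c_Y^{1/p} + 1)^{p/(1+p)}: for every y ∈ T(P_Y), H(X|Y) − c₁ log_b(n+1)/n^{γp/(2+p)} ≤ (1/n) log_b |T(P_{X|Y}|y)| ≤ H(X|Y) + c₃ log_b(n+1)/n^{(1−β)p/(1+p)}; and for every x ∈ T(P_X), H(Y|X) − c₁ log_b(n+1)/n^{γp/(2+p)} ≤ (1/n) log_b |T(P_{Y|X}|x)| ≤ H(Y|X) + c₂ log_b(n+1)/n^{(1−α)p/(1+p)}. -/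
open Set

noncomputable section

/-- A joint type with denominator `n` on the product of lattice alphabets
`{iΔx : i ∈ ℤ} × {jΔy : j ∈ ℤ}`. -/
def IsJointType (n : ℕ) (Δx Δy : ℝ) (P : ℝ × ℝ → ℝ) : Prop :=
  (∀ z, 0 ≤ P z) ∧
    (∀ z, P z ≠ 0 → (∃ i : ℤ, z.1 = (i : ℝ) * Δx) ∧ ∃ j : ℤ, z.2 = (j : ℝ) * Δy) ∧
    (∀ z, ∃ k : ℕ, P z = (k : ℝ) / n) ∧ (Function.support P).Finite ∧ ∑ᶠ z, P z = 1

/-- The `x`-marginal of a joint type. -/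
def margX (P : ℝ × ℝ → ℝ) (x : ℝ) : ℝ := ∑ᶠ y, P (x, y)

/-- The `y`-marginal of a joint type. -/
def margY (P : ℝ × ℝ → ℝ) (y : ℝ) : ℝ := ∑ᶠ x, P (x, y)

/-- Empirical distribution of a sequence `z` of length `n`. -/
def empDist {γ : Type*} (n : ℕ) (z : Fin n → γ) (a : γ) : ℝ :=
  (({k : Fin n | z k = a}).ncard : ℝ) / n

/-- The type class `T(P)`: sequences of length `n` whose empirical distribution equals `P`. -/
def typeClass {γ : Type*} (n : ℕ) (P : γ → ℝ) : Set (Fin n → γ) :=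
  {z | ∀ a, empDist n z a = P a}

/-- The conditional type class `T(P_{X|Y} | y)`: the set of sequences `x` such that the
pair sequence `(x, y)` lies in the joint type class of `P`. -/
def condTypeClassX (n : ℕ) (P : ℝ × ℝ → ℝ) (y : Fin n → ℝ) : Set (Fin n → ℝ) :=
  {x | (fun k => (x k, y k)) ∈ typeClass n P}

/-- The conditional type class `T(P_{Y|X} | x)`. -/
def condTypeClassY (n : ℕ) (P : ℝ × ℝ → ℝ) (x : Fin n → ℝ) : Set (Fin n → ℝ) :=
  {y | (fun k => (x k, y k)) ∈ typeClass n P}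

/-- Entropy with base-`b` logarithm. -/
def entropy {γ : Type*} (b : ℝ) (P : γ → ℝ) : ℝ := -∑ᶠ a, P a * Real.logb b (P a)

/-- Conditional entropy `H(X|Y)` of a joint type. -/
def condEntXY (b : ℝ) (P : ℝ × ℝ → ℝ) : ℝ := entropy b P - entropy b (margY P)

/-- Conditional entropy `H(Y|X)` of a joint type. -/
def condEntYX (b : ℝ) (P : ℝ × ℝ → ℝ) : ℝ := entropy b P - entropy b (margX P)

/-- `c₁` of Lemma 2. -/
def c1 (p cX cY : ℝ) : ℝ :=
  ((3 * Real.sqrt Real.pi / 2) *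
      ((2 : ℝ) ^ (max 0 (1 / 2 - 1 / p)) * (cX + cY) ^ (1 / p) + 1 / Real.sqrt 6)) ^
    (2 * p / (2 + p))

/-- `c₂` of Lemma 2. -/
def c2 (p cX : ℝ) : ℝ := (4 * cX ^ (1 / p) + 1) ^ (p / (1 + p))

/-- `c₃` of Lemma 2. -/
def c3 (p cY : ℝ) : ℝ := (4 * cY ^ (1 / p) + 1) ^ (p / (1 + p))

/-
A joint type is the empirical distribution of a sequence of pairs, and the conditional type class
of `y` is the orbit of `x₀` under the permutations fixing `y`, so its size is a product of
multinomial coefficients, one for each letter of `y`. The multinomial theorem applied to `k ^ k`,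
in which the term of type `k` is the largest, bounds each coefficient above by its entropy
expression exactly, and below up to a factor `n + 1` for each point of the support of the type.
It remains to bound the size `N` of the support. The lattice cells around the support points are
disjoint, so the integral of a tent function `max 0 (R - ‖u‖)` over them is at most `π R ^ 3 / 3`;
for the disc of area `N Δx Δy` this bounds `√(N Δx Δy)` by the mean norm of the support points.
Each of these points has probability at least `1 / n`, so the moment conditions bound that mean
norm in terms of `n / N`.
-/

section Multinomial

open Nat

theorem factorial_mul_pow_le_factorial_mul_pow_self (k j : ℕ) : k ! * k ^ j ≤ j ! * k ^ k := by
  rcases le_total k j with h | h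
  · calc k ! * k ^ j = k ! * k ^ (j - k) * k ^ k := by
          rw [mul_assoc, ← pow_add, Nat.sub_add_cancel h]
      _ ≤ j ! * k ^ k := by gcongr; exact Nat.factorial_mul_pow_sub_le_factorial h
  · calc k ! * k ^ j = j ! * k.descFactorial (k - j) * k ^ j := by
          rw [← Nat.factorial_mul_descFactorial (Nat.sub_le k j), Nat.sub_sub_self h]
      _ ≤ j ! * k ^ (k - j) * k ^ j := by gcongr; exact Nat.descFactorial_le_pow k (k - j)
      _ = j ! * k ^ k := by rw [mul_assoc, ← pow_add, Nat.sub_add_cancel h]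

variable {ι : Type*} (s : Finset ι) (k : ι → ℕ)

theorem multinomial_mul_prod_pow_le {j : ι → ℕ} (h : ∑ i ∈ s, j i = ∑ i ∈ s, k i) :
    multinomial s j * ∏ i ∈ s, k i ^ j i ≤ multinomial s k * ∏ i ∈ s, k i ^ k i := by
  have factorials_pos : 0 < (∏ i ∈ s, (j i)!) * ∏ i ∈ s, (k i)! := by positivity
  refine Nat.le_of_mul_le_mul_left ?_ factorials_pos
  calc (∏ i ∈ s, (j i)!) * (∏ i ∈ s, (k i)!) * (multinomial s j * ∏ i ∈ s, k i ^ j i)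
      = (∏ i ∈ s, (j i)!) * multinomial s j * ∏ i ∈ s, (k i)! * k i ^ j i := by
        rw [Finset.prod_mul_distrib]; ring
    _ ≤ (∏ i ∈ s, (k i)!) * multinomial s k * ∏ i ∈ s, (j i)! * k i ^ k i := by
        rw [multinomial_spec, multinomial_spec, h]
        exact Nat.mul_le_mul_left _
          (Finset.prod_le_prod' fun i _ ↦ factorial_mul_pow_le_factorial_mul_pow_self _ _)
    _ = (∏ i ∈ s, (j i)!) * (∏ i ∈ s, (k i)!) * (multinomial s k * ∏ i ∈ s, k i ^ k i) := by
        rw [Finset.prod_mul_distrib]; ring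

theorem card_piAntidiag_le [DecidableEq ι] (n : ℕ) :
    (s.piAntidiag n).card ≤ (n + 1) ^ s.card := by
  calc (s.piAntidiag n).card ≤ (s.pi fun _ ↦ Finset.range (n + 1)).card := by
        refine Finset.card_le_card_of_injOn (fun j i _ ↦ j i) (fun j hj ↦ ?_) fun j hj l hl h ↦ ?_
        · obtain ⟨sum_eq, -⟩ := Finset.mem_piAntidiag.1 hj
          refine Finset.mem_pi.2 fun i hi ↦ Finset.mem_range_succ_iff.2 ?_
          exact sum_eq ▸ Finset.single_le_sum_of_canonicallyOrdered hi
        · obtain ⟨-, support_j⟩ := Finset.mem_piAntidiag.1 hj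
          obtain ⟨-, support_l⟩ := Finset.mem_piAntidiag.1 hl
          ext i
          by_cases hi : i ∈ s
          · exact congrFun (congrFun h i) hi
          · rw [of_not_not (mt (support_j i) hi), of_not_not (mt (support_l i) hi)]
    _ = (n + 1) ^ s.card := by simp

theorem sum_pow_sum_eq_sum_multinomial [DecidableEq ι] :
    (∑ i ∈ s, k i) ^ ∑ i ∈ s, k i =
      ∑ j ∈ s.piAntidiag (∑ i ∈ s, k i), multinomial s j * ∏ i ∈ s, k i ^ j i := by
  simpa using Finset.sum_pow_eq_sum_piAntidiag s k (∑ i ∈ s, k i)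

theorem multinomial_mul_prod_pow_self_le :
    multinomial s k * ∏ i ∈ s, k i ^ k i ≤ (∑ i ∈ s, k i) ^ ∑ i ∈ s, k i := by
  classical
  let k' : ι → ℕ := fun i ↦ if i ∈ s then k i else 0
  have agree : ∀ i ∈ s, k' i = k i := fun i hi ↦ if_pos hi
  have mem_antidiag : k' ∈ s.piAntidiag (∑ i ∈ s, k i) :=
    Finset.mem_piAntidiag.2
      ⟨Finset.sum_congr rfl agree, fun i hi ↦ of_not_not fun h ↦ hi (if_neg h)⟩
  have prod_eq : ∏ i ∈ s, k i ^ k' i = ∏ i ∈ s, k i ^ k i :=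
    Finset.prod_congr rfl fun i hi ↦ by rw [agree i hi]
  rw [sum_pow_sum_eq_sum_multinomial, ← multinomial_congr agree, ← prod_eq]
  exact Finset.single_le_sum_of_canonicallyOrdered
    (f := fun j ↦ multinomial s j * ∏ i ∈ s, k i ^ j i) mem_antidiag

theorem sum_pow_sum_le_multinomial :
    (∑ i ∈ s, k i) ^ ∑ i ∈ s, k i ≤
      (∑ i ∈ s, k i + 1) ^ s.card * (multinomial s k * ∏ i ∈ s, k i ^ k i) := by
  classical
  calc (∑ i ∈ s, k i) ^ ∑ i ∈ s, k i
      ≤ (s.piAntidiag (∑ i ∈ s, k i)).card • (multinomial s k * ∏ i ∈ s, k i ^ k i) := by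
        rw [sum_pow_sum_eq_sum_multinomial]
        exact Finset.sum_le_card_nsmul _ _ _ fun j hj ↦
          multinomial_mul_prod_pow_le s k (Finset.mem_piAntidiag.1 hj).1
    _ ≤ (∑ i ∈ s, k i + 1) ^ s.card * (multinomial s k * ∏ i ∈ s, k i ^ k i) := by
        rw [smul_eq_mul]
        gcongr
        exact card_piAntidiag_le s _

end Multinomial

section Occurrences

open Equiv MulAction Nat

/-- The number of occurrences `N(a | z)` of the letter `a` in the sequence `z`. -/
def occurrences {ι A : Type*} (z : ι → A) (a : A) : ℕ := {i | z i = a}.ncard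

/-- The conditional type class of `x₀` given `y` (the `V`-shell of Csiszár and Körner): the
sequences whose joint occurrence counts with `y` are those of `x₀`. -/
def shell {ι A B : Type*} (x₀ : ι → A) (y : ι → B) : Set (ι → A) :=
  {x | occurrences (fun i ↦ (x i, y i)) = occurrences fun i ↦ (x₀ i, y i)}

variable {ι κ A B : Type*}

theorem occurrences_eq_card_filter [Fintype ι] [DecidableEq A] (z : ι → A) (a : A) :
    occurrences z a = Finset.card {i | z i = a} := by
  rw [occurrences, Set.ncard_eq_toFinset_card', Set.toFinset_ofPred]

theorem occurrences_apply_pos [Finite ι] (z : ι → A) (i : ι) : 0 < occurrences z (z i) :=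
  (Set.ncard_pos (Set.toFinite _)).2 ⟨i, rfl⟩

theorem occurrences_comp_equiv (z : κ → A) (e : ι ≃ κ) : occurrences (z ∘ e) = occurrences z := by
  ext a
  exact Set.ncard_preimage_of_injective_subset_range (s := {i | z i = a}) e.injective (by simp)

theorem exists_equiv_of_occurrences_eq [Finite ι] [Finite κ] {f : ι → A} {g : κ → A}
    (h : occurrences f = occurrences g) : ∃ e : ι ≃ κ, g ∘ e = f := by
  have fiberEquiv (a : A) : Nonempty ({i // f i = a} ≃ {j // g j = a}) :=
    Finite.card_eq.1 (congrFun h a)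
  exact ⟨Equiv.ofFiberEquiv fun a ↦ (fiberEquiv a).some, funext fun i ↦ Equiv.ofFiberEquiv_map _ i⟩

theorem sum_occurrences_filter_eq [Fintype ι] [DecidableEq A] [DecidableEq B] (z : ι → A)
    (f : A → B) (b : B) :
    ∑ a ∈ Finset.univ.image z with f a = b, occurrences z a = occurrences (f ∘ z) b := by
  have maps : ∀ i ∈ ({i | f (z i) = b} : Finset ι), z i ∈ {a ∈ Finset.univ.image z | f a = b} := by
    simp
  rw [occurrences_eq_card_filter]
  refine (Finset.card_eq_sum_card_fiberwise maps).symm ▸ ?_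
  refine Finset.sum_congr rfl fun a ha ↦ ?_
  obtain ⟨-, rfl⟩ := Finset.mem_filter.1 ha
  rw [occurrences_eq_card_filter, Finset.filter_filter]
  congr! 2 with i
  simp +contextual

theorem card_stabilizer_eq_prod_factorial [Fintype ι] [DecidableEq A] (z : ι → A) :
    Nat.card (stabilizer (Perm ι)ᵈᵐᵃ z) = ∏ a ∈ Finset.univ.image z, (occurrences z a)! := by
  classical
  have stabilizerEquiv : {g : Perm ι // z ∘ g = z} ≃ stabilizer (Perm ι)ᵈᵐᵃ z :=
    DomMulAct.mk.subtypeEquiv fun g ↦ DomMulAct.mem_stabilizer_iff.symm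
  rw [← Nat.card_congr stabilizerEquiv, Nat.card_eq_fintype_card, DomMulAct.stabilizer_card']
  simp only [occurrences_eq_card_filter, Fintype.card_subtype]

theorem shell_eq_orbit [Finite ι] (x₀ : ι → A) (y : ι → B) :
    shell x₀ y = orbit (stabilizer (Perm ι)ᵈᵐᵃ y) x₀ := by
  ext x
  constructor
  · intro hx
    obtain ⟨e, he⟩ := exists_equiv_of_occurrences_eq hx
    have he' (i : ι) : x₀ (e i) = x i ∧ y (e i) = y i := Prod.ext_iff.1 (congrFun he i)
    exact ⟨⟨DomMulAct.mk e, DomMulAct.mem_stabilizer_iff.2 (funext fun i ↦ (he' i).2)⟩,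
      funext fun i ↦ (he' i).1⟩
  · rintro ⟨⟨g, hg⟩, rfl⟩
    let e : Perm ι := DomMulAct.mk.symm g
    have fixes_y : y ∘ e = y := DomMulAct.mem_stabilizer_iff.1 hg
    calc occurrences (fun i ↦ (x₀ (e i), y i)) = occurrences ((fun i ↦ (x₀ i, y i)) ∘ e) := by
          nth_rw 1 [← fixes_y]
          rfl
      _ = occurrences fun i ↦ (x₀ i, y i) := occurrences_comp_equiv _ e

theorem ncard_shell_pos [Finite ι] (x₀ : ι → A) (y : ι → B) : 0 < (shell x₀ y).ncard := by
  refine (Set.ncard_pos ?_).2 ⟨x₀, rfl⟩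
  have := Finite.of_equiv (Perm ι) DomMulAct.mk
  rw [shell_eq_orbit]
  exact Set.finite_range _

theorem ncard_shell_mul_prod_factorial [Fintype ι] [DecidableEq A] [DecidableEq B]
    (x₀ : ι → A) (y : ι → B) :
    (shell x₀ y).ncard *
        ∏ z ∈ Finset.univ.image fun i ↦ (x₀ i, y i), (occurrences (fun i ↦ (x₀ i, y i)) z)! =
      ∏ b ∈ Finset.univ.image y, (occurrences y b)! := by
  set H := stabilizer (Perm ι)ᵈᵐᵃ y
  set K := stabilizer (Perm ι)ᵈᵐᵃ fun i ↦ (x₀ i, y i)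
  have mem_K (g : (Perm ι)ᵈᵐᵃ) : g ∈ K ↔ g • x₀ = x₀ ∧ g • y = y := by
    simp only [K, mem_stabilizer_iff, funext_iff, Prod.ext_iff, forall_and]
    rfl
  have K_le_H : K ≤ H := fun g hg ↦ ((mem_K g).1 hg).2
  have stabilizer_eq : stabilizer H x₀ = K.subgroupOf H := by
    ext g
    rw [Subgroup.mem_subgroupOf, mem_K]
    exact ⟨fun h ↦ ⟨h, g.2⟩, fun h ↦ h.1⟩
  rw [← card_stabilizer_eq_prod_factorial, ← card_stabilizer_eq_prod_factorial, shell_eq_orbit,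
    ← index_stabilizer, stabilizer_eq, mul_comm]
  have card_mul_index := Subgroup.relIndex_mul_relIndex ⊥ K H bot_le K_le_H
  rwa [Subgroup.relIndex_bot_left, Subgroup.relIndex_bot_left] at card_mul_index

variable [Fintype ι] (x₀ : ι → A) (y : ι → B)

theorem sum_occurrences_filter_snd [DecidableEq A] [DecidableEq B] (b : B) :
    ∑ z ∈ Finset.univ.image fun i ↦ (x₀ i, y i) with z.2 = b, occurrences (fun i ↦ (x₀ i, y i)) z =
      occurrences y b :=
  sum_occurrences_filter_eq _ _ _

theorem ncard_shell_eq_prod_multinomial [DecidableEq A] [DecidableEq B] :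
    (shell x₀ y).ncard = ∏ b ∈ Finset.univ.image y,
      multinomial {z ∈ Finset.univ.image fun i ↦ (x₀ i, y i) | z.2 = b}
        (occurrences fun i ↦ (x₀ i, y i)) := by
  set w : ι → A × B := fun i ↦ (x₀ i, y i)
  have maps : ∀ z ∈ Finset.univ.image w, z.2 ∈ Finset.univ.image y := by simp [w]
  have factorials_pos : 0 < ∏ z ∈ Finset.univ.image w, (occurrences w z)! := by positivity
  refine Nat.eq_of_mul_eq_mul_left factorials_pos ?_
  rw [mul_comm, ncard_shell_mul_prod_factorial, ← Finset.prod_fiberwise_of_maps_to maps,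
    ← Finset.prod_mul_distrib]
  refine Finset.prod_congr rfl fun b _ ↦ ?_
  rw [multinomial_spec, sum_occurrences_filter_snd]

theorem prod_occurrences_eq_prod_pow [DecidableEq A] (z : ι → A) :
    ∏ i, occurrences z (z i) = ∏ a ∈ Finset.univ.image z, occurrences z a ^ occurrences z a := by
  rw [Finset.prod_comp]
  simp only [occurrences_eq_card_filter]

theorem ncard_shell_mul_prod_occurrences [DecidableEq A] [DecidableEq B] :
    (shell x₀ y).ncard * ∏ i, occurrences (fun i ↦ (x₀ i, y i)) (x₀ i, y i) =
      ∏ b ∈ Finset.univ.image y,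
        (multinomial {z ∈ Finset.univ.image fun i ↦ (x₀ i, y i) | z.2 = b}
            (occurrences fun i ↦ (x₀ i, y i)) *
          ∏ z ∈ Finset.univ.image fun i ↦ (x₀ i, y i) with z.2 = b,
            occurrences (fun i ↦ (x₀ i, y i)) z ^ occurrences (fun i ↦ (x₀ i, y i)) z) := by
  have maps : ∀ z ∈ Finset.univ.image fun i ↦ (x₀ i, y i), z.2 ∈ Finset.univ.image y := by simp
  rw [prod_occurrences_eq_prod_pow fun i ↦ (x₀ i, y i), ncard_shell_eq_prod_multinomial,
    ← Finset.prod_fiberwise_of_maps_to maps, ← Finset.prod_mul_distrib]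

theorem ncard_shell_mul_prod_occurrences_le :
    (shell x₀ y).ncard * ∏ i, occurrences (fun i ↦ (x₀ i, y i)) (x₀ i, y i) ≤
      ∏ i, occurrences y (y i) := by
  classical
  rw [ncard_shell_mul_prod_occurrences, prod_occurrences_eq_prod_pow y]
  refine Finset.prod_le_prod' fun b _ ↦ (multinomial_mul_prod_pow_self_le _ _).trans_eq ?_
  rw [sum_occurrences_filter_snd]

theorem prod_occurrences_le_ncard_shell_mul [DecidableEq A] [DecidableEq B] :
    ∏ i, occurrences y (y i) ≤
      (Fintype.card ι + 1) ^ (Finset.univ.image fun i ↦ (x₀ i, y i)).card *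
        ((shell x₀ y).ncard * ∏ i, occurrences (fun i ↦ (x₀ i, y i)) (x₀ i, y i)) := by
  have maps : ∀ z ∈ Finset.univ.image fun i ↦ (x₀ i, y i), z.2 ∈ Finset.univ.image y := by simp
  rw [ncard_shell_mul_prod_occurrences, prod_occurrences_eq_prod_pow y,
    Finset.card_eq_sum_card_fiberwise maps, ← Finset.prod_pow_eq_pow_sum,
    ← Finset.prod_mul_distrib]
  refine Finset.prod_le_prod' fun b _ ↦ ?_
  have le_card : occurrences y b ≤ Fintype.card ι := by
    rw [occurrences_eq_card_filter]
    exact Finset.card_le_univ _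
  rw [← sum_occurrences_filter_snd x₀] at le_card ⊢
  refine (sum_pow_sum_le_multinomial _ _).trans ?_
  gcongr

end Occurrences

section EmpiricalDistributions

variable {A : Type*} {n : ℕ}

theorem exists_occurrences_eq {ι : Type*} [Fintype ι] (k : A →₀ ℕ)
    (hk : ∑ a ∈ k.support, k a = Fintype.card ι) : ∃ z : ι → A, occurrences z = k := by
  classical
  let letters := Finsupp.toMultiset k
  have card_eq : Fintype.card ι = Fintype.card letters := by
    rw [Multiset.card_coe, Finsupp.card_toMultiset, ← hk]
    rfl
  refine ⟨(fun l : letters ↦ l.1) ∘ Fintype.equivOfCardEq card_eq, funext fun a ↦ ?_⟩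
  rw [occurrences_comp_equiv, occurrences_eq_card_filter, ← Finsupp.count_toMultiset]
  change _ = Multiset.count a letters
  conv_rhs => rw [← Multiset.map_univ_coe letters]
  rw [Multiset.count_map, ← Finset.filter_val, Finset.card_val]
  congr! 2 with l
  exact eq_comm

theorem empDist_eq_occurrences_div (z : Fin n → A) (a : A) :
    empDist n z a = occurrences z a / n := rfl

theorem empDist_eq_empDist_iff {z z' : Fin n → A} :
    empDist n z = empDist n z' ↔ occurrences z = occurrences z' := by
  rcases Nat.eq_zero_or_pos n with rfl | hn
  · simp [Subsingleton.elim z z']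
  · simp only [funext_iff, empDist_eq_occurrences_div]
    field_simp
    norm_cast

theorem mem_typeClass_iff {z : Fin n → A} {P : A → ℝ} : z ∈ typeClass n P ↔ empDist n z = P :=
  funext_iff.symm

theorem condTypeClassX_empDist (x₀ y : Fin n → ℝ) :
    condTypeClassX n (empDist n fun i ↦ (x₀ i, y i)) y = shell x₀ y := by
  ext x
  exact mem_typeClass_iff.trans empDist_eq_empDist_iff

theorem finsum_empDist_mul (z : Fin n → A) (g : A → ℝ) :
    ∑ᶠ a, empDist n z a * g a = (∑ i, g (z i)) / n := by
  classical
  have support_subset : Function.support (fun a ↦ empDist n z a * g a) ⊆ Finset.univ.image z := by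
    refine Function.support_subset_iff'.2 fun a ha ↦ ?_
    have not_mem (i : Fin n) : z i ≠ a := fun h ↦ ha (by simp [← h])
    simp [empDist, not_mem]
  rw [finsum_eq_sum_of_support_subset _ support_subset, Finset.sum_comp, Finset.sum_div]
  refine Finset.sum_congr rfl fun a _ ↦ ?_
  rw [empDist_eq_occurrences_div, occurrences_eq_card_filter, nsmul_eq_mul]
  ring

theorem margY_empDist (w : Fin n → ℝ × ℝ) : margY (empDist n w) = empDist n fun i ↦ (w i).2 := by
  classical
  ext y
  have support_subset : Function.support (fun x ↦ empDist n w (x, y)) ⊆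
      Finset.univ.image fun i ↦ (w i).1 := by
    refine Function.support_subset_iff'.2 fun x hx ↦ ?_
    have not_mem (i : Fin n) : w i ≠ (x, y) := fun h ↦ hx (by simpa using ⟨i, by rw [h]⟩)
    simp [empDist, not_mem]
  rw [margY, finsum_eq_sum_of_support_subset _ support_subset]
  simp only [empDist_eq_occurrences_div, ← Finset.sum_div, occurrences_eq_card_filter]
  rw [Finset.card_eq_sum_card_fiberwise (f := fun i ↦ (w i).1)
    (t := Finset.univ.image fun i ↦ (w i).1) (by simp [Set.MapsTo])]
  push_cast
  simp only [Finset.filter_filter, Prod.ext_iff, and_comm]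

theorem empDist_swap {B : Type*} (w : Fin n → A × B) :
    empDist n (fun i ↦ (w i).swap) = empDist n w ∘ Prod.swap := by
  ext z
  simp only [empDist, Function.comp_apply, ← Prod.swap_eq_iff_eq_swap]

theorem margX_empDist (w : Fin n → ℝ × ℝ) : margX (empDist n w) = empDist n fun i ↦ (w i).1 := by
  change margY (empDist n w ∘ Prod.swap) = _
  rw [← empDist_swap, margY_empDist]
  rfl

theorem prod_occurrences_pos (z : Fin n → A) : 0 < ∏ i, (occurrences z (z i) : ℝ) :=
  Finset.prod_pos fun i _ ↦ mod_cast occurrences_apply_pos z i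

theorem entropy_empDist (b : ℝ) (z : Fin n → A) :
    n * entropy b (empDist n z) =
      n * Real.logb b n - Real.logb b (∏ i, (occurrences z (z i) : ℝ)) := by
  rcases Nat.eq_zero_or_pos n with rfl | hn
  · simp
  have occurrences_ne_zero (i : Fin n) : (occurrences z (z i) : ℝ) ≠ 0 :=
    mod_cast (occurrences_apply_pos z i).ne'
  rw [entropy, finsum_empDist_mul, mul_neg, mul_div_cancel₀ _ (by positivity),
    Real.logb_prod _ _ fun i _ ↦ occurrences_ne_zero i]
  have logb_div (i : Fin n) : Real.logb b (empDist n z (z i)) =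
      Real.logb b (occurrences z (z i)) - Real.logb b n :=
    Real.logb_div (occurrences_ne_zero i) (by positivity)
  simp [logb_div]

theorem condEntXY_empDist (b : ℝ) (x y : Fin n → ℝ) :
    n * condEntXY b (empDist n fun i ↦ (x i, y i)) =
      Real.logb b (∏ i, (occurrences y (y i) : ℝ)) -
        Real.logb b (∏ i, (occurrences (fun i ↦ (x i, y i)) (x i, y i) : ℝ)) := by
  rw [condEntXY, margY_empDist, mul_sub, entropy_empDist, entropy_empDist]
  ring

theorem logb_ncard_shell_le {b : ℝ} (hb : 1 < b) (x y : Fin n → ℝ) :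
    Real.logb b (shell x y).ncard ≤ n * condEntXY b (empDist n fun i ↦ (x i, y i)) := by
  have shell_pos := ncard_shell_pos x y
  have prod_pos := prod_occurrences_pos fun i ↦ (x i, y i)
  rw [condEntXY_empDist, le_sub_iff_add_le, ← Real.logb_mul (by positivity) prod_pos.ne']
  refine Real.logb_le_logb_of_le hb (by positivity) ?_
  exact_mod_cast ncard_shell_mul_prod_occurrences_le x y

theorem condEntXY_empDist_le {b : ℝ} (hb : 1 < b) (x y : Fin n → ℝ) :
    n * condEntXY b (empDist n fun i ↦ (x i, y i)) ≤ Real.logb b (shell x y).ncard +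
      (Finset.univ.image fun i ↦ (x i, y i)).card * Real.logb b (n + 1) := by
  have shell_pos := ncard_shell_pos x y
  have prod_pos := prod_occurrences_pos fun i ↦ (x i, y i)
  have prod_le := prod_occurrences_le_ncard_shell_mul x y
  rw [Fintype.card_fin] at prod_le
  rw [condEntXY_empDist, sub_le_iff_le_add, ← Real.logb_pow, add_comm (Real.logb b _), add_assoc,
    ← Real.logb_mul (by positivity) prod_pos.ne', ← Real.logb_mul (by positivity) (by positivity)]
  exact Real.logb_le_logb_of_le hb (prod_occurrences_pos y) (mod_cast prod_le)

theorem IsJointType.exists_empDist_eq {Δx Δy : ℝ} {P : ℝ × ℝ → ℝ} (hP : IsJointType n Δx Δy P) :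
    0 < n ∧ ∃ w : Fin n → ℝ × ℝ, empDist n w = P := by
  obtain ⟨-, -, rational, finite_support, sum_eq_one⟩ := hP
  choose k hk using rational
  have hn : (n : ℝ) ≠ 0 := by
    intro hn
    simp [hk, hn] at sum_eq_one
  have support_eq : Function.support k = Function.support P := by
    ext z
    simp [hk, hn]
  have sum_eq : ∑ z ∈ finite_support.toFinset, k z = n := by
    rw [finsum_eq_sum_of_support_toFinset_subset _ finite_support subset_rfl] at sum_eq_one
    simp only [hk, ← Finset.sum_div] at sum_eq_one
    rw [div_eq_one_iff_eq hn] at sum_eq_one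
    exact_mod_cast sum_eq_one
  obtain ⟨w, hw⟩ := exists_occurrences_eq (ι := Fin n)
    (Finsupp.ofSupportFinite k (support_eq ▸ finite_support)) (by
      rw [Fintype.card_fin, ← sum_eq]
      refine Finset.sum_congr ?_ fun _ _ ↦ rfl
      ext z
      simp [Finsupp.ofSupportFinite, support_eq])
  refine ⟨Nat.pos_of_ne_zero (mod_cast hn), w, funext fun z ↦ ?_⟩
  rw [empDist_eq_occurrences_div, hw, hk]
  rfl

theorem exists_empDist_prod_eq {w : Fin n → ℝ × ℝ} {y : Fin n → ℝ}
    (hy : y ∈ typeClass n (margY (empDist n w))) :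
    ∃ x : Fin n → ℝ, empDist n (fun i ↦ (x i, y i)) = empDist n w := by
  rw [mem_typeClass_iff, margY_empDist, empDist_eq_empDist_iff] at hy
  obtain ⟨e, he⟩ := exists_equiv_of_occurrences_eq hy
  refine ⟨fun i ↦ (w (e i)).1, ?_⟩
  rw [empDist_eq_empDist_iff, ← occurrences_comp_equiv w e, ← he]
  rfl

end EmpiricalDistributions

section Packing

open MeasureTheory Metric Module

/-- The cone over the ball of radius `R`: the tent function whose integral is compared with the
volume of the lattice cells. -/
def cone {E : Type*} [NormedAddCommGroup E] (R : ℝ) (u : E) : ℝ := max 0 (R - ‖u‖)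

theorem integral_pow_mul_sub (m : ℕ) (R : ℝ) :
    ∫ r in (0 : ℝ)..R, r ^ m * (R - r) = R ^ (m + 2) / ((m + 1) * (m + 2)) := by
  simp_rw [mul_sub, ← pow_succ]
  rw [intervalIntegral.integral_sub (Continuous.intervalIntegrable (by fun_prop) _ _)
    (Continuous.intervalIntegrable (by fun_prop) _ _), intervalIntegral.integral_mul_const,
    integral_pow, integral_pow]
  push_cast
  field_simp
  ring

section Cone

variable {E : Type*} [NormedAddCommGroup E] (R : ℝ)

theorem cone_nonneg (u : E) : 0 ≤ cone R u := le_max_left _ _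

theorem le_cone (u : E) : R - ‖u‖ ≤ cone R u := le_max_right _ _

theorem sub_norm_sub_mul_norm_sq_le_cone {c : ℝ} (hc : 0 < c) (z u : E) :
    R - ‖z‖ - 1 / (2 * c) - c / 2 * ‖u - z‖ ^ 2 ≤ cone R u := by
  have am_gm : ‖u - z‖ ≤ c / 2 * ‖u - z‖ ^ 2 + 1 / (2 * c) := by
    rw [← sub_nonneg]
    calc 0 ≤ (c * ‖u - z‖ - 1) ^ 2 / (2 * c) := by positivity
      _ = c / 2 * ‖u - z‖ ^ 2 + 1 / (2 * c) - ‖u - z‖ := by field_simp; ring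
  linarith [le_cone R u, norm_le_norm_add_norm_sub' u z]

@[fun_prop]
theorem continuous_cone : Continuous (cone R : E → ℝ) := by
  unfold cone
  fun_prop

variable [MeasurableSpace E] [BorelSpace E] (μ : Measure E)

theorem integrable_cone [ProperSpace E] [IsFiniteMeasureOnCompacts μ] :
    Integrable (cone R) μ := by
  refine (continuous_cone R).integrable_of_hasCompactSupport ?_
  refine .of_support_subset_isCompact (isCompact_closedBall (0 : E) R) fun u hu ↦ ?_
  rw [mem_closedBall_zero_iff]
  by_contra! norm_gt
  exact hu (max_eq_left (sub_nonpos.2 norm_gt.le))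

theorem integral_cone [NormedSpace ℝ E] [FiniteDimensional ℝ E] [Nontrivial E]
    [μ.IsAddHaarMeasure] (hR : 0 ≤ R) :
    ∫ u, cone R u ∂μ = μ.real (ball 0 1) * R ^ (finrank ℝ E + 1) / (finrank ℝ E + 1) := by
  obtain ⟨m, hm⟩ := Nat.exists_eq_add_one.2 (finrank_pos (R := ℝ) (M := E))
  have radial : ∫ r in Ioi (0 : ℝ), r ^ m * max 0 (R - r) = R ^ (m + 2) / ((m + 1) * (m + 2)) := by
    have vanish : ∀ r ∈ Ioi (0 : ℝ) \ Ioc 0 R, r ^ m * max 0 (R - r) = 0 := by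
      intro r ⟨r_pos, r_not_mem⟩
      have R_lt : R < r := by by_contra! h; exact r_not_mem ⟨r_pos, h⟩
      rw [max_eq_left (by linarith), mul_zero]
    rw [setIntegral_eq_of_subset_of_forall_sdiff_eq_zero measurableSet_Ioi Ioc_subset_Ioi_self
      vanish, ← integral_pow_mul_sub, intervalIntegral.integral_of_le hR]
    refine setIntegral_congr_fun measurableSet_Ioc fun r hr ↦ ?_
    simp only [max_eq_right (sub_nonneg.2 hr.2)]
  calc ∫ u, cone R u ∂μ
      = finrank ℝ E • μ.real (ball 0 1) • ∫ r in Ioi (0 : ℝ), r ^ m * max 0 (R - r) := by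
        simpa [hm, cone] using integral_fun_norm_addHaar μ fun r ↦ max 0 (R - r)
    _ = _ := by
        rw [radial, hm]
        simp only [nsmul_eq_mul, smul_eq_mul]
        push_cast
        field_simp
        ring

end Cone

theorem integral_cone_plane {R : ℝ} (hR : 0 ≤ R) :
    ∫ u : ℝ × ℝ, cone R (WithLp.toLp 2 u) = Real.pi * R ^ 3 / 3 := by
  have finrank_eq : finrank ℝ (WithLp 2 (ℝ × ℝ)) = 2 := by
    rw [(WithLp.linearEquiv 2 ℝ (ℝ × ℝ)).finrank_eq]
    simp
  have volume_ball : volume.real (ball (0 : WithLp 2 (ℝ × ℝ)) 1) = Real.pi := by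
    rw [Measure.real, InnerProductSpace.volume_ball_of_dim_even (k := 1) finrank_eq]
    simp [Real.pi_pos.le]
  have : Nontrivial (WithLp 2 (ℝ × ℝ)) := nontrivial_of_finrank_pos (R := ℝ) (by simp [finrank_eq])
  calc ∫ u : ℝ × ℝ, cone R (WithLp.toLp 2 u) = ∫ u : WithLp 2 (ℝ × ℝ), cone R u := by
        exact (WithLp.volume_preserving_toLp ℝ ℝ).integral_comp
          (MeasurableEquiv.toLp 2 _).measurableEmbedding _
    _ = Real.pi * R ^ 3 / 3 := by
        rw [integral_cone R volume hR, volume_ball, finrank_eq]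
        norm_num

theorem integrable_cone_plane (R : ℝ) :
    Integrable fun u : ℝ × ℝ ↦ cone R (WithLp.toLp 2 u) :=
  (WithLp.volume_preserving_toLp ℝ ℝ).integrable_comp_of_integrable (integrable_cone R volume)

/-- The rectangle with side lengths `Δx` and `Δy` centred at `z`; half-open, so that the cells
around the points of the lattice `Δx ℤ × Δy ℤ` are disjoint. -/
def cell (Δx Δy : ℝ) (z : ℝ × ℝ) : Set (ℝ × ℝ) :=
  Ioc (z.1 - Δx / 2) (z.1 + Δx / 2) ×ˢ Ioc (z.2 - Δy / 2) (z.2 + Δy / 2)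

theorem measurableSet_cell (Δx Δy : ℝ) (z : ℝ × ℝ) : MeasurableSet (cell Δx Δy z) :=
  measurableSet_Ioc.prod measurableSet_Ioc

variable {Δx Δy : ℝ}

theorem volume_real_cell (hx : 0 ≤ Δx) (hy : 0 ≤ Δy) (z : ℝ × ℝ) :
    volume.real (cell Δx Δy z) = Δx * Δy := by
  rw [cell, Measure.volume_eq_prod, measureReal_prod_prod, Real.volume_real_Ioc_of_le (by linarith),
    Real.volume_real_Ioc_of_le (by linarith)]
  ring

theorem integrableOn_cell {f : ℝ × ℝ → ℝ} (hf : Continuous f) (z : ℝ × ℝ) :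
    IntegrableOn f (cell Δx Δy z) :=
  (hf.continuousOn.integrableOn_compact (isCompact_Icc.prod isCompact_Icc)).mono_set
    (prod_mono Ioc_subset_Icc_self Ioc_subset_Icc_self)

theorem integral_Ioc_sub_sq {δ : ℝ} (hδ : 0 ≤ δ) (s : ℝ) :
    ∫ x in Ioc (s - δ / 2) (s + δ / 2), (x - s) ^ 2 = δ ^ 3 / 12 := by
  rw [← intervalIntegral.integral_of_le (by linarith),
    intervalIntegral.integral_comp_sub_right (fun x ↦ x ^ 2), integral_pow]
  push_cast
  ring

theorem integral_cell_norm_sub_sq (hx : 0 ≤ Δx) (hy : 0 ≤ Δy) (z : ℝ × ℝ) :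
    ∫ u in cell Δx Δy z, ‖WithLp.toLp 2 (u - z)‖ ^ 2 = Δx * Δy * (Δx ^ 2 + Δy ^ 2) / 12 := by
  have fst_part : ∫ u in cell Δx Δy z, (u.1 - z.1) ^ 2 = Δx ^ 3 / 12 * Δy := by
    have product := setIntegral_prod_mul (μ := volume) (ν := volume) (fun x ↦ (x - z.1) ^ 2)
      (fun _ ↦ (1 : ℝ)) (Ioc (z.1 - Δx / 2) (z.1 + Δx / 2)) (Ioc (z.2 - Δy / 2) (z.2 + Δy / 2))
    simpa [integral_Ioc_sub_sq hx, cell, Measure.volume_eq_prod, hy] using product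
  have snd_part : ∫ u in cell Δx Δy z, (u.2 - z.2) ^ 2 = Δx * (Δy ^ 3 / 12) := by
    have product := setIntegral_prod_mul (μ := volume) (ν := volume) (fun _ ↦ (1 : ℝ))
      (fun y ↦ (y - z.2) ^ 2) (Ioc (z.1 - Δx / 2) (z.1 + Δx / 2))
      (Ioc (z.2 - Δy / 2) (z.2 + Δy / 2))
    simpa [integral_Ioc_sub_sq hy, cell, Measure.volume_eq_prod, hx] using product
  have norm_sub_sq (u : ℝ × ℝ) :
      ‖WithLp.toLp 2 (u - z)‖ ^ 2 = (u.1 - z.1) ^ 2 + (u.2 - z.2) ^ 2 := by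
    simp [WithLp.prod_norm_sq_eq_of_L2]
  simp only [norm_sub_sq]
  rw [integral_add (integrableOn_cell (by fun_prop) z) (integrableOn_cell (by fun_prop) z),
    fst_part, snd_part]
  ring

theorem sub_norm_sub_le_integral_cell_cone (hx : Δx ∈ Ioc 0 1) (hy : Δy ∈ Ioc 0 1) (R : ℝ)
    (z : ℝ × ℝ) :
    Δx * Δy * (R - ‖WithLp.toLp 2 z‖ - 1 / √6) ≤
      ∫ u in cell Δx Δy z, cone R (WithLp.toLp 2 u) := by
  have sqrt_pos : 0 < √6 := by positivity
  have sqrt_sq : √6 ^ 2 = 6 := Real.sq_sqrt (by norm_num)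
  let minorant (u : ℝ × ℝ) : ℝ :=
    R - ‖WithLp.toLp 2 z‖ - 1 / (2 * √6) - √6 / 2 * ‖WithLp.toLp 2 (u - z)‖ ^ 2
  have continuous_minorant : Continuous minorant := by fun_prop
  have minorant_le (u : ℝ × ℝ) : minorant u ≤ cone R (WithLp.toLp 2 u) :=
    sub_norm_sub_mul_norm_sq_le_cone R sqrt_pos (WithLp.toLp 2 z) (WithLp.toLp 2 u)
  have moment_le : √6 / 2 * ((Δx ^ 2 + Δy ^ 2) / 12) ≤ 1 / (2 * √6) := by
    have sides_le : Δx ^ 2 + Δy ^ 2 ≤ 2 := by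
      linarith [pow_le_one₀ (n := 2) hx.1.le hx.2, pow_le_one₀ (n := 2) hy.1.le hy.2]
    calc √6 / 2 * ((Δx ^ 2 + Δy ^ 2) / 12) ≤ √6 / 2 * (2 / 12) := by gcongr
      _ = 1 / (2 * √6) := by field_simp; linarith
  calc Δx * Δy * (R - ‖WithLp.toLp 2 z‖ - 1 / √6)
      = Δx * Δy * (R - ‖WithLp.toLp 2 z‖ - 1 / (2 * √6) - 1 / (2 * √6)) := by
        field_simp
        ring
    _ ≤ Δx * Δy * (R - ‖WithLp.toLp 2 z‖ - 1 / (2 * √6) -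
          √6 / 2 * ((Δx ^ 2 + Δy ^ 2) / 12)) := by
        have := hx.1
        have := hy.1
        gcongr
    _ = ∫ u in cell Δx Δy z, minorant u := by
        rw [integral_sub (integrableOn_cell (by fun_prop) z) (integrableOn_cell (by fun_prop) z),
          integral_const_mul, integral_cell_norm_sub_sq hx.1.le hy.1.le, setIntegral_const,
          volume_real_cell hx.1.le hy.1.le, smul_eq_mul]
        ring
    _ ≤ ∫ u in cell Δx Δy z, cone R (WithLp.toLp 2 u) :=
        setIntegral_mono (integrableOn_cell continuous_minorant z)
          (integrable_cone_plane R).integrableOn minorant_le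

theorem eq_of_mem_Ioc_int_mul {δ x : ℝ} (hδ : 0 < δ) {i j : ℤ}
    (hi : x ∈ Ioc (i * δ - δ / 2) (i * δ + δ / 2)) (hj : x ∈ Ioc (j * δ - δ / 2) (j * δ + δ / 2)) :
    i = j := by
  have lt_of_mem {i j : ℤ} (hi : x ∈ Ioc (i * δ - δ / 2) (i * δ + δ / 2))
      (hj : x ∈ Ioc (j * δ - δ / 2) (j * δ + δ / 2)) : i < j + 1 := by
    have scaled : i * δ < (j + 1) * δ := by linarith [hi.1, hj.2]
    exact_mod_cast lt_of_mul_lt_mul_right scaled hδ.le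
  linarith [Int.le_of_lt_add_one (lt_of_mem hi hj), Int.le_of_lt_add_one (lt_of_mem hj hi)]

/-- The product lattice `Δx ℤ × Δy ℤ` in the plane. -/
def productLattice (Δx Δy : ℝ) : Set (ℝ × ℝ) :=
  {z | (∃ i : ℤ, z.1 = i * Δx) ∧ ∃ j : ℤ, z.2 = j * Δy}

theorem pairwiseDisjoint_cell (hx : 0 < Δx) (hy : 0 < Δy) :
    (productLattice Δx Δy).PairwiseDisjoint (cell Δx Δy) := by
  rintro ⟨-, -⟩ ⟨⟨i, rfl⟩, j, rfl⟩ ⟨-, -⟩ ⟨⟨i', rfl⟩, j', rfl⟩ z_ne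
  refine Set.disjoint_left.2 fun u hu hu' ↦ z_ne ?_
  rw [eq_of_mem_Ioc_int_mul hx hu.1 hu'.1, eq_of_mem_Ioc_int_mul hy hu.2 hu'.2]

theorem sum_sub_norm_sub_le (hx : Δx ∈ Ioc 0 1) (hy : Δy ∈ Ioc 0 1) {R : ℝ} (hR : 0 ≤ R)
    {S : Finset (ℝ × ℝ)} (hS : ↑S ⊆ productLattice Δx Δy) :
    Δx * Δy * ∑ z ∈ S, (R - ‖WithLp.toLp 2 z‖ - 1 / √6) ≤ Real.pi * R ^ 3 / 3 := by
  calc Δx * Δy * ∑ z ∈ S, (R - ‖WithLp.toLp 2 z‖ - 1 / √6)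
      ≤ ∑ z ∈ S, ∫ u in cell Δx Δy z, cone R (WithLp.toLp 2 u) := by
        rw [Finset.mul_sum]
        exact Finset.sum_le_sum fun z _ ↦ sub_norm_sub_le_integral_cell_cone hx hy R z
    _ = ∫ u in ⋃ z ∈ S, cell Δx Δy z, cone R (WithLp.toLp 2 u) :=
        (integral_biUnion_finset S (fun z _ ↦ measurableSet_cell Δx Δy z)
          ((pairwiseDisjoint_cell hx.1 hy.1).subset hS)
          fun z _ ↦ (integrable_cone_plane R).integrableOn).symm
    _ ≤ ∫ u : ℝ × ℝ, cone R (WithLp.toLp 2 u) :=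
        setIntegral_le_integral (integrable_cone_plane R) (.of_forall fun u ↦ cone_nonneg R _)
    _ = Real.pi * R ^ 3 / 3 := integral_cone_plane hR

end Packing

section SupportSize

variable {p : ℝ}

theorem norm_toLp_rpow_le (hp : 0 < p) (z : ℝ × ℝ) :
    ‖WithLp.toLp 2 z‖ ^ p ≤ 2 ^ max 0 (p / 2 - 1) * (|z.1| ^ p + |z.2| ^ p) := by
  have sq_rpow {r : ℝ} (hr : 0 ≤ r) : (r ^ 2) ^ (p / 2) = r ^ p := by
    rw [← Real.rpow_natCast_mul hr, Nat.cast_ofNat, mul_div_cancel₀ p two_ne_zero]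
  rw [← sq_rpow (norm_nonneg _), ← sq_rpow (abs_nonneg z.1), ← sq_rpow (abs_nonneg z.2),
    WithLp.prod_norm_sq_eq_of_L2, Real.norm_eq_abs, Real.norm_eq_abs]
  rcases le_total (p / 2) 1 with h | h
  · rw [max_eq_left (by linarith), Real.rpow_zero, one_mul]
    exact Real.rpow_add_le_add_rpow (sq_nonneg _) (sq_nonneg _) (by positivity) h
  · rw [max_eq_right (by linarith)]
    exact_mod_cast NNReal.rpow_add_le_mul_rpow_add_rpow ⟨|z.1| ^ 2, sq_nonneg _⟩
      ⟨|z.2| ^ 2, sq_nonneg _⟩ h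

theorem mean_norm_le (hp : 1 ≤ p) {S : Finset (ℝ × ℝ)} (hS : S.Nonempty) {m : ℝ}
    (hm : (∑ z ∈ S, (|z.1| ^ p + |z.2| ^ p)) / S.card ≤ m) :
    (∑ z ∈ S, ‖WithLp.toLp 2 z‖) / S.card ≤ 2 ^ max 0 (1 / 2 - 1 / p) * m ^ (1 / p) := by
  have p_pos : 0 < p := by linarith
  have m_nonneg : 0 ≤ m := le_trans (by positivity) hm
  have card_pos : (0 : ℝ) < S.card := mod_cast hS.card_pos
  have power_mean := Real.arith_mean_le_rpow_mean S (fun _ ↦ 1 / (S.card : ℝ))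
    (fun z ↦ ‖WithLp.toLp 2 z‖) (fun _ _ ↦ by positivity)
    (by rw [Finset.sum_const, nsmul_eq_mul, mul_one_div_cancel card_pos.ne'])
    (fun _ _ ↦ norm_nonneg _) hp
  simp only [one_div_mul_eq_div, ← Finset.sum_div] at power_mean
  have exponent_eq : max 0 (p / 2 - 1) * (1 / p) = max 0 (1 / 2 - 1 / p) := by
    rw [max_mul_of_nonneg _ _ (by positivity), zero_mul]
    congr 1
    field_simp
  calc (∑ z ∈ S, ‖WithLp.toLp 2 z‖) / S.card
      ≤ ((∑ z ∈ S, ‖WithLp.toLp 2 z‖ ^ p) / S.card) ^ (1 / p) := power_mean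
    _ ≤ ((∑ z ∈ S, 2 ^ max 0 (p / 2 - 1) * (|z.1| ^ p + |z.2| ^ p)) / S.card) ^ (1 / p) := by
        gcongr with z
        exact norm_toLp_rpow_le p_pos z
    _ ≤ (2 ^ max 0 (p / 2 - 1) * m) ^ (1 / p) := by
        rw [← Finset.mul_sum, mul_div_assoc]
        gcongr
    _ = 2 ^ max 0 (1 / 2 - 1 / p) * m ^ (1 / p) := by
        rw [Real.mul_rpow (by positivity) m_nonneg, ← Real.rpow_mul zero_le_two, exponent_eq]

theorem sqrt_card_mul_area_le {Δx Δy : ℝ} (hx : Δx ∈ Ioc 0 1) (hy : Δy ∈ Ioc 0 1)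
    {S : Finset (ℝ × ℝ)} (hS : S.Nonempty) (S_subset : ↑S ⊆ productLattice Δx Δy) :
    √(S.card * (Δx * Δy)) ≤
      3 * √Real.pi / 2 * ((∑ z ∈ S, ‖WithLp.toLp 2 z‖) / S.card + 1 / √6) := by
  have card_pos : (0 : ℝ) < S.card := mod_cast hS.card_pos
  have area_pos : 0 < Δx * Δy := mul_pos hx.1 hy.1
  obtain ⟨R, hR, R_nonneg⟩ : ∃ R : ℝ, √(S.card * (Δx * Δy)) = √Real.pi * R ∧ 0 ≤ R :=
    ⟨√(S.card * (Δx * Δy)) / √Real.pi, by field_simp, by positivity⟩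
  have disc_area : S.card * (Δx * Δy) = Real.pi * R ^ 2 := by
    rw [← Real.sq_sqrt (by positivity : 0 ≤ S.card * (Δx * Δy)), hR, mul_pow,
      Real.sq_sqrt Real.pi_pos.le]
  have packing : Δx * Δy * (S.card * R - ∑ z ∈ S, ‖WithLp.toLp 2 z‖ - S.card * (1 / √6)) ≤
      Δx * Δy * (S.card * R / 3) := by
    calc _ = Δx * Δy * ∑ z ∈ S, (R - ‖WithLp.toLp 2 z‖ - 1 / √6) := by
          simp only [Finset.sum_sub_distrib, Finset.sum_const, nsmul_eq_mul]
      _ ≤ Real.pi * R ^ 3 / 3 := sum_sub_norm_sub_le hx hy R_nonneg S_subset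
      _ = Δx * Δy * (S.card * R / 3) := by linear_combination -R / 3 * disc_area
  have radius_le : R ≤ 3 / 2 * ((∑ z ∈ S, ‖WithLp.toLp 2 z‖) / S.card + 1 / √6) := by
    have := le_of_mul_le_mul_left packing area_pos
    rw [← mul_le_mul_iff_right₀ card_pos]
    calc S.card * R ≤ 3 / 2 * (∑ z ∈ S, ‖WithLp.toLp 2 z‖ + S.card * (1 / √6)) := by linarith
      _ = _ := by field_simp
  rw [hR]
  calc √Real.pi * R ≤ √Real.pi * (3 / 2 * _) := by gcongr
    _ = _ := by ring

theorem le_rpow_div_rpow_of_sqrt_mul_le {ν A C : ℝ} (hν : 0 < ν) (hA : 0 < A) (hC : 0 ≤ C)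
    (hp : 0 < p) (h : √(ν * A) ≤ C * (1 / ν) ^ (1 / p)) :
    ν ≤ C ^ (2 * p / (2 + p)) / A ^ (p / (2 + p)) := by
  have raised : ν ^ (p / (2 + p)) * A ^ (p / (2 + p)) ≤
      C ^ (2 * p / (2 + p)) * (1 / ν ^ (2 / (2 + p))) := by
    calc ν ^ (p / (2 + p)) * A ^ (p / (2 + p)) = √(ν * A) ^ (2 * p / (2 + p)) := by
          rw [Real.sqrt_eq_rpow, ← Real.rpow_mul (by positivity), Real.mul_rpow hν.le hA.le]
          ring_nf
      _ ≤ (C * (1 / ν) ^ (1 / p)) ^ (2 * p / (2 + p)) := by gcongr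
      _ = C ^ (2 * p / (2 + p)) * (1 / ν ^ (2 / (2 + p))) := by
          rw [Real.mul_rpow hC (by positivity), ← Real.rpow_mul (by positivity),
            Real.div_rpow zero_le_one hν.le, Real.one_rpow]
          congr 3
          field_simp
  have exponents_add : p / (2 + p) + 2 / (2 + p) = 1 := by field_simp; ring
  rw [le_div_iff₀ (by positivity)]
  calc ν * A ^ (p / (2 + p))
      = ν ^ (p / (2 + p)) * A ^ (p / (2 + p)) * ν ^ (2 / (2 + p)) := by
        rw [mul_right_comm, ← Real.rpow_add hν, exponents_add, Real.rpow_one]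
    _ ≤ C ^ (2 * p / (2 + p)) * (1 / ν ^ (2 / (2 + p))) * ν ^ (2 / (2 + p)) := by gcongr
    _ = C ^ (2 * p / (2 + p)) := by field_simp

theorem card_div_le_c1_div {Δx Δy : ℝ} (hx : Δx ∈ Ioc 0 1) (hy : Δy ∈ Ioc 0 1) (hp : 1 ≤ p)
    {S : Finset (ℝ × ℝ)} (hS : S.Nonempty) (S_subset : ↑S ⊆ productLattice Δx Δy)
    {n : ℕ} (card_le : S.card ≤ n) {cX cY : ℝ}
    (moment_le : ∑ z ∈ S, (|z.1| ^ p + |z.2| ^ p) ≤ n * (cX + cY)) :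
    (S.card : ℝ) / n ≤ c1 p cX cY / (n * Δx * Δy) ^ (p / (2 + p)) := by
  have card_pos : (0 : ℝ) < S.card := mod_cast hS.card_pos
  have n_pos : (0 : ℝ) < n := mod_cast hS.card_pos.trans_le card_le
  have c_nonneg : 0 ≤ cX + cY :=
    nonneg_of_mul_nonneg_right (le_trans (by positivity) moment_le) n_pos
  have hx_pos := hx.1
  have hy_pos := hy.1
  set ν : ℝ := S.card / n
  have ν_inv : 1 / ν = n / S.card := one_div_div _ _
  have one_le : 1 ≤ (1 / ν) ^ (1 / p) := by
    refine Real.one_le_rpow ?_ (by positivity)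
    rw [ν_inv, one_le_div card_pos]
    exact_mod_cast card_le
  refine le_rpow_div_rpow_of_sqrt_mul_le (by positivity) (by positivity) (by positivity)
    (by linarith) ?_
  calc √(ν * (n * Δx * Δy)) = √(S.card * (Δx * Δy)) := by
        congr 1
        simp only [ν]
        field_simp
    _ ≤ 3 * √Real.pi / 2 * ((∑ z ∈ S, ‖WithLp.toLp 2 z‖) / S.card + 1 / √6) :=
        sqrt_card_mul_area_le hx hy hS S_subset
    _ ≤ 3 * √Real.pi / 2 *
          (2 ^ max 0 (1 / 2 - 1 / p) * ((cX + cY) * (1 / ν)) ^ (1 / p) + 1 / √6) := by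
        gcongr
        refine mean_norm_le hp hS ?_
        rw [ν_inv, div_le_iff₀ card_pos]
        refine moment_le.trans_eq ?_
        field_simp
    _ ≤ 3 * √Real.pi / 2 * (2 ^ max 0 (1 / 2 - 1 / p) * ((cX + cY) * (1 / ν)) ^ (1 / p) +
          1 / √6 * (1 / ν) ^ (1 / p)) := by
        gcongr
        exact le_mul_of_one_le_right (by positivity) one_le
    _ = _ := by
        rw [Real.mul_rpow c_nonneg (by positivity)]
        ring

end SupportSize

section ConditionalTypeClass

theorem sum_image_abs_rpow_le {n : ℕ} {p cX cY : ℝ} (w : Fin n → ℝ × ℝ)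
    (hcX : ∑ᶠ x, margX (empDist n w) x * |x| ^ p ≤ cX)
    (hcY : ∑ᶠ y, margY (empDist n w) y * |y| ^ p ≤ cY) :
    ∑ z ∈ Finset.univ.image w, (|z.1| ^ p + |z.2| ^ p) ≤ n * (cX + cY) := by
  rcases Nat.eq_zero_or_pos n with rfl | hn
  · simp
  rw [margX_empDist, finsum_empDist_mul, div_le_iff₀' (by positivity)] at hcX
  rw [margY_empDist, finsum_empDist_mul, div_le_iff₀' (by positivity)] at hcY
  calc ∑ z ∈ Finset.univ.image w, (|z.1| ^ p + |z.2| ^ p)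
      ≤ ∑ i, (|(w i).1| ^ p + |(w i).2| ^ p) :=
        Finset.sum_image_le_of_nonneg fun z _ ↦ by positivity
    _ ≤ n * (cX + cY) := by
        rw [Finset.sum_add_distrib]
        linarith

variable {n : ℕ} {Δx Δy : ℝ} {P : ℝ × ℝ → ℝ}

theorem IsJointType.card_image_div_le_c1_div {w : Fin n → ℝ × ℝ}
    (hP : IsJointType n Δx Δy (empDist n w)) (hx : Δx ∈ Ioc 0 1) (hy : Δy ∈ Ioc 0 1)
    {p cX cY : ℝ} (hp : 1 ≤ p) (hcX : ∑ᶠ x, margX (empDist n w) x * |x| ^ p ≤ cX)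
    (hcY : ∑ᶠ y, margY (empDist n w) y * |y| ^ p ≤ cY) :
    ((Finset.univ.image w).card : ℝ) / n ≤ c1 p cX cY / (n * Δx * Δy) ^ (p / (2 + p)) := by
  have n_pos := hP.exists_empDist_eq.1
  have : Nonempty (Fin n) := ⟨⟨0, n_pos⟩⟩
  refine card_div_le_c1_div hx hy hp (Finset.univ_nonempty.image w) ?_
    (Finset.card_image_le.trans_eq (Finset.card_fin n)) (sum_image_abs_rpow_le w hcX hcY)
  simp only [Finset.coe_image, Finset.coe_univ, image_univ, range_subset_iff]
  intro i
  have occurrences_pos := occurrences_apply_pos w i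
  exact hP.2.1 (w i) (by rw [empDist_eq_occurrences_div]; positivity)

theorem IsJointType.condTypeClassX_bounds (hP : IsJointType n Δx Δy P)
    (hx : Δx ∈ Ioc 0 1) (hy : Δy ∈ Ioc 0 1) {b p cX cY : ℝ} (hb : 1 < b) (hp : 1 ≤ p)
    (hcX : ∑ᶠ x, margX P x * |x| ^ p ≤ cX) (hcY : ∑ᶠ y, margY P y * |y| ^ p ≤ cY)
    {y : Fin n → ℝ} (mem_y : y ∈ typeClass n (margY P)) :
    condEntXY b P - c1 p cX cY * Real.logb b (n + 1) / (n * Δx * Δy) ^ (p / (2 + p)) ≤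
        1 / n * Real.logb b (condTypeClassX n P y).ncard ∧
      1 / n * Real.logb b (condTypeClassX n P y).ncard ≤ condEntXY b P := by
  obtain ⟨n_pos, w, rfl⟩ := hP.exists_empDist_eq
  obtain ⟨x, hxy⟩ := exists_empDist_prod_eq mem_y
  rw [← hxy] at hP hcX hcY ⊢
  have n_pos' : (0 : ℝ) < n := mod_cast n_pos
  have card_le := hP.card_image_div_le_c1_div hx hy hp hcX hcY
  have log_nonneg : 0 ≤ Real.logb b (n + 1) := Real.logb_nonneg hb (by linarith)
  rw [condTypeClassX_empDist, one_div_mul_eq_div, le_div_iff₀' n_pos', div_le_iff₀' n_pos']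
  refine ⟨?_, logb_ncard_shell_le hb x y⟩
  have entropy_le := condEntXY_empDist_le hb x y
  have error_le : (Finset.univ.image fun i ↦ (x i, y i)).card * Real.logb b (n + 1) ≤
      n * (c1 p cX cY * Real.logb b (n + 1) / (n * Δx * Δy) ^ (p / (2 + p))) := by
    rw [div_le_iff₀' n_pos'] at card_le
    calc _ ≤ n * (c1 p cX cY / (n * Δx * Δy) ^ (p / (2 + p))) * Real.logb b (n + 1) := by gcongr
      _ = _ := by ring
  linarith

theorem IsJointType.swap (hP : IsJointType n Δx Δy P) : IsJointType n Δy Δx (P ∘ Prod.swap) := by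
  obtain ⟨nonneg, lattice, rational, finite_support, sum_eq_one⟩ := hP
  refine ⟨fun z ↦ nonneg _, fun z hz ↦ (lattice _ hz).symm, fun z ↦ rational _,
    finite_support.preimage Prod.swap_injective.injOn, ?_⟩
  rw [← sum_eq_one]
  exact finsum_comp_equiv (Equiv.prodComm ℝ ℝ)

theorem condEntXY_comp_swap (b : ℝ) (P : ℝ × ℝ → ℝ) :
    condEntXY b (P ∘ Prod.swap) = condEntYX b P := by
  have entropy_swap : entropy b (P ∘ Prod.swap) = entropy b P :=
    congrArg Neg.neg (finsum_comp_equiv (Equiv.prodComm ℝ ℝ) (f := fun z ↦ P z * Real.logb b (P z)))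
  rw [condEntXY, entropy_swap]
  rfl

theorem condTypeClassX_comp_swap (x : Fin n → ℝ) :
    condTypeClassX n (P ∘ Prod.swap) x = condTypeClassY n P x := by
  ext y
  change _ ∈ typeClass _ _ ↔ _ ∈ typeClass _ _
  rw [mem_typeClass_iff, mem_typeClass_iff, ← Prod.swap_surjective.injective_comp_right.eq_iff,
    ← empDist_swap]
  rfl

end ConditionalTypeClass

theorem size_of_conditional_type_class_general (n : ℕ) (b p cX cY Δx Δy : ℝ) (hb : 1 < b)
    (hp : 1 ≤ p) (hx : Δx ∈ Ioc 0 1) (hy : Δy ∈ Ioc 0 1) (P : ℝ × ℝ → ℝ)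
    (hP : IsJointType n Δx Δy P) (hcX : ∑ᶠ x, margX P x * |x| ^ p ≤ cX)
    (hcY : ∑ᶠ y, margY P y * |y| ^ p ≤ cY) :
    (∀ y ∈ typeClass n (margY P),
      condEntXY b P - c1 p cX cY * Real.logb b (n + 1) / (n * Δx * Δy) ^ (p / (2 + p)) ≤
          1 / n * Real.logb b (condTypeClassX n P y).ncard ∧
        1 / n * Real.logb b (condTypeClassX n P y).ncard ≤ condEntXY b P) ∧
    (∀ x ∈ typeClass n (margX P),
      condEntYX b P - c1 p cX cY * Real.logb b (n + 1) / (n * Δx * Δy) ^ (p / (2 + p)) ≤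
          1 / n * Real.logb b (condTypeClassY n P x).ncard ∧
        1 / n * Real.logb b (condTypeClassY n P x).ncard ≤ condEntYX b P) := by
  refine ⟨fun y mem_y ↦ hP.condTypeClassX_bounds hx hy hb hp hcX hcY mem_y, fun x mem_x ↦ ?_⟩
  have swapped := hP.swap.condTypeClassX_bounds hy hx hb hp hcY hcX mem_x
  rwa [condEntXY_comp_swap, condTypeClassX_comp_swap, mul_right_comm, c1, add_comm cY, ← c1]
    at swapped

theorem rpow_neg_mem_Ioc {n : ℕ} (hn : 0 < n) {a : ℝ} (ha : 0 ≤ a) :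
    (n : ℝ) ^ (-a) ∈ Ioc 0 1 :=
  ⟨by positivity, Real.rpow_le_one_of_one_le_of_nonpos (mod_cast hn) (neg_nonpos.2 ha)⟩

theorem mul_rpow_neg_mul_rpow_neg {x α β γ : ℝ} (hx : 0 < x) (h : α + β + γ = 1) :
    x * x ^ (-α) * x ^ (-β) = x ^ γ := by
  obtain rfl : γ = 1 + -α + -β := by linarith
  rw [Real.rpow_add hx, Real.rpow_add hx, Real.rpow_one]

-- `c2` and `c3` are the same function, so this covers both corrections.
theorem c2_mul_logb_div_rpow_nonneg {P : ℝ → ℝ} (hP : ∀ a, 0 ≤ P a) {p c : ℝ}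
    (hc : ∑ᶠ a, P a * |a| ^ p ≤ c) {b : ℝ} (hb : 1 < b) (n : ℕ) (r : ℝ) :
    0 ≤ c2 p c * Real.logb b (n + 1) / (n : ℝ) ^ r := by
  have c_nonneg : 0 ≤ c := (finsum_nonneg fun a ↦ by have := hP a; positivity).trans hc
  have log_nonneg : 0 ≤ Real.logb b (n + 1) := Real.logb_nonneg hb (by simp)
  unfold c2
  positivity

/-- Lemma 4 (Size of a conditional type class). -/
theorem size_of_conditional_type_class
    (n : ℕ) (hn : 0 < n) (b p cX cY α β gam : ℝ) (hb : 1 < b) (hp : 1 ≤ p)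
    (hα : α ∈ Set.Ioo (0 : ℝ) 1) (hβ : β ∈ Set.Ioo (0 : ℝ) 1) (hγ : gam ∈ Set.Ioo (0 : ℝ) 1)
    (hsum : α + β + gam = 1)
    (P : ℝ × ℝ → ℝ) (hP : IsJointType n ((n : ℝ) ^ (-α)) ((n : ℝ) ^ (-β)) P)
    (hcX : (∑ᶠ x, margX P x * |x| ^ p) ≤ cX)
    (hcY : (∑ᶠ y, margY P y * |y| ^ p) ≤ cY) :
    (∀ y : Fin n → ℝ, y ∈ typeClass n (margY P) →
      condEntXY b P - c1 p cX cY * Real.logb b ((n : ℝ) + 1) / (n : ℝ) ^ (gam * p / (2 + p)) ≤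
          (1 / (n : ℝ)) * Real.logb b ((condTypeClassX n P y).ncard) ∧
        (1 / (n : ℝ)) * Real.logb b ((condTypeClassX n P y).ncard) ≤
          condEntXY b P +
            c3 p cY * Real.logb b ((n : ℝ) + 1) / (n : ℝ) ^ ((1 - β) * p / (1 + p))) ∧
    (∀ x : Fin n → ℝ, x ∈ typeClass n (margX P) →
      condEntYX b P - c1 p cX cY * Real.logb b ((n : ℝ) + 1) / (n : ℝ) ^ (gam * p / (2 + p)) ≤
          (1 / (n : ℝ)) * Real.logb b ((condTypeClassY n P x).ncard) ∧
        (1 / (n : ℝ)) * Real.logb b ((condTypeClassY n P x).ncard) ≤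
          condEntYX b P +
            c2 p cX * Real.logb b ((n : ℝ) + 1) / (n : ℝ) ^ ((1 - α) * p / (1 + p))) := by
  have correction_X := c2_mul_logb_div_rpow_nonneg (fun _ ↦ finsum_nonneg fun _ ↦ hP.1 _) hcX hb n
  have correction_Y := c2_mul_logb_div_rpow_nonneg (fun _ ↦ finsum_nonneg fun _ ↦ hP.1 _) hcY hb n
  have bounds := size_of_conditional_type_class_general n b p cX cY _ _ hb hp
    (rpow_neg_mem_Ioc hn hα.1.le) (rpow_neg_mem_Ioc hn hβ.1.le) P hP hcX hcY
  rw [mul_rpow_neg_mul_rpow_neg (mod_cast hn) hsum, ← Real.rpow_mul (Nat.cast_nonneg n),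
    ← mul_div_assoc] at bounds
  obtain ⟨bounds_X, bounds_Y⟩ := bounds
  exact ⟨fun y hy ↦ (bounds_X y hy).imp_right fun upper ↦
      upper.trans (le_add_of_nonneg_right (correction_Y _)),
    fun x hx ↦ (bounds_Y x hx).imp_right fun upper ↦
      upper.trans (le_add_of_nonneg_right (correction_X _))⟩
end
end

section
/- Let k ≥ 1, let α_j ≥ 0 and Δ_{j,n} = n^{−α_j} for j = 1,…,k, let A_n = ∏_{j=1}^k {iΔ_{j,n} : i ∈ ℤ} ⊂ ℝ^k, and let P_X ∈ P_n(A_n) be a joint type of k symbols with denominator n satisfying E_{P_X}[‖X‖_p^p] ≤ c for a real p ≥ 1. Then the support satisfies |S(P_X)| ≤ σ(k,p,c) · n^{(k + p∑_{j=1}^k α_j)/(k+p)}, where σ(k,p,c) = [V_k(1)]^{p/(k+p)} · [ ((k+1)/k)( max{1, k^{1/2 − 1/p}} c^{1/p} + min{k/4, √(k/12)} ) ]^{kp/(k+p)} and V_k(1) is the volume of the k-dimensional unit ball. -/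
open Set

noncomputable section

/-- A joint type with denominator `n` of `k` symbols on the product lattice
`∏_j {i Δ_j : i ∈ ℤ} ⊂ ℝ^k`. -/
def IsTypeVec (k n : ℕ) (Δ : Fin k → ℝ) (P : (Fin k → ℝ) → ℝ) : Prop :=
  (∀ x, 0 ≤ P x) ∧ (∀ x, P x ≠ 0 → ∀ j, ∃ i : ℤ, x j = (i : ℝ) * Δ j) ∧
    (∀ x, ∃ m : ℕ, P x = (m : ℝ) / n) ∧ (Function.support P).Finite ∧ ∑ᶠ x, P x = 1

/-- The volume `V_k(1)` of the `k`-dimensional unit ball. -/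
def unitBallVol (k : ℕ) : ℝ :=
  (MeasureTheory.volume (Metric.ball (0 : EuclideanSpace ℝ (Fin k)) 1)).toReal

/-- `σ(k, p, c)` of Lemma 15. -/
def sigmaConst (k : ℕ) (p c : ℝ) : ℝ :=
  unitBallVol k ^ (p / (k + p)) *
    (((k : ℝ) + 1) / k *
        (max 1 ((k : ℝ) ^ ((1 : ℝ) / 2 - 1 / p)) * c ^ (1 / p) +
          min ((k : ℝ) / 4) (Real.sqrt ((k : ℝ) / 12)))) ^
      ((k : ℝ) * p / (k + p))

/-!
Spread the support `S` out to the union `U` of the lattice cells centred at its points, so that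
`|U| = |S| ∏ Δ_j`. Among sets of given volume a ball centred at the origin has the least mean
norm, so a small mean of `‖y‖` over `U` bounds `|U|`. That mean is at most the mean of `‖x‖` over
`S` plus the mean distance of a point of a cell to its centre. As every support point has
probability at least `1 / n`, the moment constraint gives `∑_{x ∈ S} ‖x‖_p^p ≤ n c`, and the power
mean inequality turns this into a bound on the mean norm over `S`. The resulting inequality
contains `|S|` on both sides and is solved for it.
-/

section PowerSums

variable {ι : Type*} {s : Finset ι} {f : ι → ℝ} {p q : ℝ}

lemma sum_rpow_le_rpow_sum (hp : 1 ≤ p) (hf : ∀ i ∈ s, 0 ≤ f i) :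
    ∑ i ∈ s, f i ^ p ≤ (∑ i ∈ s, f i) ^ p := by
  have hsplit : ∀ t : ℝ, 0 ≤ t → t ^ p = t * t ^ (p - 1) := fun t ht ↦ by
    rw [← Real.rpow_one_add' ht (by linarith), add_sub_cancel]
  rw [hsplit _ (Finset.sum_nonneg hf), Finset.sum_mul]
  refine Finset.sum_le_sum fun i hi ↦ ?_
  rw [hsplit _ (hf i hi)]
  have := hf i hi
  have := Finset.single_le_sum hf hi
  gcongr

lemma rpow_sum_rpow_le_of_exponent_le (hp : 0 < p) (hpq : p ≤ q) (hf : ∀ i ∈ s, 0 ≤ f i) :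
    (∑ i ∈ s, f i ^ q) ^ (1 / q) ≤ (∑ i ∈ s, f i ^ p) ^ (1 / p) := by
  have hq : 0 < q := hp.trans_le hpq
  have hfp : ∀ i ∈ s, 0 ≤ f i ^ p := fun i hi ↦ Real.rpow_nonneg (hf i hi) p
  calc (∑ i ∈ s, f i ^ q) ^ (1 / q)
      = (∑ i ∈ s, (f i ^ p) ^ (q / p)) ^ (1 / q) := by
        congr 1
        refine Finset.sum_congr rfl fun i hi ↦ ?_
        rw [← Real.rpow_mul (hf i hi), mul_div_cancel₀ _ hp.ne']
    _ ≤ ((∑ i ∈ s, f i ^ p) ^ (q / p)) ^ (1 / q) := by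
        have := Finset.sum_nonneg fun i hi ↦ Real.rpow_nonneg (hfp i hi) (q / p)
        gcongr
        exact sum_rpow_le_rpow_sum ((one_le_div hp).2 hpq) hfp
    _ = (∑ i ∈ s, f i ^ p) ^ (1 / p) := by
        rw [← Real.rpow_mul (Finset.sum_nonneg hfp)]
        congr 1
        field_simp

lemma rpow_sum_rpow_le_card_rpow_mul (hp : 0 < p) (hpq : p ≤ q) (hf : ∀ i ∈ s, 0 ≤ f i) :
    (∑ i ∈ s, f i ^ p) ^ (1 / p) ≤
      (s.card : ℝ) ^ (1 / p - 1 / q) * (∑ i ∈ s, f i ^ q) ^ (1 / q) := by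
  have hq : 0 < q := hp.trans_le hpq
  have hfp : ∀ i ∈ s, 0 ≤ f i ^ p := fun i hi ↦ Real.rpow_nonneg (hf i hi) p
  have hfq : ∑ i ∈ s, (f i ^ p) ^ (q / p) = ∑ i ∈ s, f i ^ q :=
    Finset.sum_congr rfl fun i hi ↦ by
      rw [← Real.rpow_mul (hf i hi), mul_div_cancel₀ _ hp.ne']
  calc (∑ i ∈ s, f i ^ p) ^ (1 / p)
      = ((∑ i ∈ s, f i ^ p) ^ (q / p)) ^ (1 / q) := by
        rw [← Real.rpow_mul (Finset.sum_nonneg hfp)]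
        congr 1
        field_simp
    _ ≤ ((s.card : ℝ) ^ (q / p - 1) * ∑ i ∈ s, f i ^ q) ^ (1 / q) := by
        have := Real.rpow_nonneg (Finset.sum_nonneg hfp) (q / p)
        gcongr
        rw [← hfq]
        exact Real.rpow_sum_le_const_mul_sum_rpow_of_nonneg s ((one_le_div hp).2 hpq) hfp
    _ = (s.card : ℝ) ^ (1 / p - 1 / q) * (∑ i ∈ s, f i ^ q) ^ (1 / q) := by
        rw [Real.mul_rpow (by positivity)
          (Finset.sum_nonneg fun i hi ↦ Real.rpow_nonneg (hf i hi) q),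
          ← Real.rpow_mul (Nat.cast_nonneg _)]
        congr 2
        field_simp

end PowerSums

section EuclideanNorm

variable {ι : Type*} [Fintype ι] {p : ℝ}

lemma euclideanNorm_eq_rpow_sum (x : EuclideanSpace ℝ ι) :
    ‖x‖ = (∑ j, |x j| ^ (2 : ℝ)) ^ (1 / 2 : ℝ) := by
  simp only [EuclideanSpace.norm_eq, Real.sqrt_eq_rpow, Real.norm_eq_abs, Real.rpow_two]

lemma euclideanNorm_le_rpow_sum (hp : 0 < p) (hp2 : p ≤ 2) (x : EuclideanSpace ℝ ι) :
    ‖x‖ ≤ (∑ j, |x j| ^ p) ^ (1 / p) := by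
  rw [euclideanNorm_eq_rpow_sum]
  exact rpow_sum_rpow_le_of_exponent_le hp hp2 fun j _ ↦ abs_nonneg (x j)

lemma euclideanNorm_le_max_mul_rpow_sum (hp : 0 < p) (x : EuclideanSpace ℝ ι) :
    ‖x‖ ≤ max 1 ((Fintype.card ι : ℝ) ^ (1 / 2 - 1 / p : ℝ)) *
      (∑ j, |x j| ^ p) ^ (1 / p) := by
  have hnonneg : 0 ≤ (∑ j, |x j| ^ p) ^ (1 / p) := by positivity
  rcases le_total p 2 with hp2 | hp2
  · refine (euclideanNorm_le_rpow_sum hp hp2 x).trans ?_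
    exact le_mul_of_one_le_left hnonneg (le_max_left _ _)
  · rw [euclideanNorm_eq_rpow_sum]
    refine (rpow_sum_rpow_le_card_rpow_mul two_pos hp2 fun j _ ↦ abs_nonneg (x j)).trans ?_
    exact mul_le_mul_of_nonneg_right (le_max_right _ _) hnonneg

lemma sum_euclideanNorm_le (hp : 1 ≤ p) (S : Finset (EuclideanSpace ℝ ι)) :
    ∑ x ∈ S, ‖x‖ ≤ max 1 ((Fintype.card ι : ℝ) ^ (1 / 2 - 1 / p : ℝ)) *
      ((S.card : ℝ) ^ (1 - 1 / p) * (∑ x ∈ S, ∑ j, |x j| ^ p) ^ (1 / p)) := by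
  have hp0 : 0 < p := one_pos.trans_le hp
  have hroot : ∀ x : EuclideanSpace ℝ ι, ((∑ j, |x j| ^ p) ^ (1 / p)) ^ p = ∑ j, |x j| ^ p :=
    fun x ↦ by rw [one_div, Real.rpow_inv_rpow (by positivity) hp0.ne']
  have hmean := rpow_sum_rpow_le_card_rpow_mul one_pos hp (s := S)
    (f := fun x ↦ (∑ j, |x j| ^ p) ^ (1 / p)) fun x _ ↦ by positivity
  simp only [Real.rpow_one, div_one, hroot] at hmean
  calc ∑ x ∈ S, ‖x‖
      ≤ ∑ x ∈ S, max 1 ((Fintype.card ι : ℝ) ^ (1 / 2 - 1 / p : ℝ)) *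
          (∑ j, |x j| ^ p) ^ (1 / p) :=
        Finset.sum_le_sum fun x _ ↦ euclideanNorm_le_max_mul_rpow_sum hp0 x
    _ ≤ _ := by
        rw [← Finset.mul_sum]
        gcongr

end EuclideanNorm

section Bathtub

open MeasureTheory Module Metric

variable {E : Type*} [NormedAddCommGroup E] [NormedSpace ℝ E] [FiniteDimensional ℝ E]
  [MeasurableSpace E] [BorelSpace E] (μ : Measure E) [μ.IsAddHaarMeasure]

lemma integrable_posPart_sub_norm (R : ℝ) : Integrable (fun y : E ↦ max (R - ‖y‖) 0) μ := by
  refine Continuous.integrable_of_hasCompactSupport (by fun_prop) ?_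
  refine HasCompactSupport.of_support_subset_isCompact (isCompact_closedBall (0 : E) R) ?_
  intro y hy
  rw [mem_closedBall_zero_iff]
  by_contra! hlt
  exact hy (max_eq_right (by linarith))

lemma integral_posPart_sub_norm [Nontrivial E] {R : ℝ} (hR : 0 ≤ R) :
    ∫ y, max (R - ‖y‖) 0 ∂μ =
      μ.real (ball 0 1) * (R ^ (finrank ℝ E + 1) / (finrank ℝ E + 1)) := by
  have hlevel : ∀ t ∈ Ioi (0 : ℝ), {y : E | t < max (R - ‖y‖) 0} = ball 0 (R - t) := by
    intro t ht
    ext y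
    simp only [mem_ofPred_eq, lt_max_iff, (mem_Ioi.1 ht).not_gt, or_false, mem_ball_zero_iff,
      lt_sub_comm]
  have hball : ∀ r : ℝ, 0 ≤ r → μ.real (ball (0 : E) r) =
      μ.real (ball 0 1) * r ^ finrank ℝ E := fun r hr ↦ by
    rw [measureReal_def, Measure.addHaar_ball μ _ hr, ENNReal.toReal_mul,
      ENNReal.toReal_ofReal (by positivity), measureReal_def, mul_comm]
  calc ∫ y, max (R - ‖y‖) 0 ∂μ
      = ∫ t in Ioi 0, μ.real (ball (0 : E) (R - t)) := by
        rw [(integrable_posPart_sub_norm μ R).integral_eq_integral_meas_lt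
          (ae_of_all _ fun y ↦ le_max_right _ _)]
        exact setIntegral_congr_fun measurableSet_Ioi fun t ht ↦ by simp only [hlevel t ht]
    _ = ∫ t in Ioc 0 R, μ.real (ball (0 : E) (R - t)) := by
        refine setIntegral_eq_of_subset_of_forall_sdiff_eq_zero measurableSet_Ioi
          Ioc_subset_Ioi_self fun t ht ↦ ?_
        have hRt : R < t := not_le.1 fun hle ↦ ht.2 ⟨ht.1, hle⟩
        rw [ball_eq_empty.2 (by linarith), measureReal_empty]
    _ = ∫ t in (0 : ℝ)..R, μ.real (ball (0 : E) 1) * (R - t) ^ finrank ℝ E := by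
        rw [intervalIntegral.integral_of_le hR]
        exact setIntegral_congr_fun measurableSet_Ioc fun t ht ↦ hball _ (sub_nonneg.2 ht.2)
    _ = μ.real (ball 0 1) * (R ^ (finrank ℝ E + 1) / (finrank ℝ E + 1)) := by
        rw [intervalIntegral.integral_const_mul,
          intervalIntegral.integral_comp_sub_left (fun t ↦ t ^ finrank ℝ E), integral_pow]
        simp

lemma measureReal_le_of_setIntegral_norm_le [Nontrivial E] {U : Set E} {ρ : ℝ} (hρ : 0 < ρ)
    (hU : μ U ≠ ⊤) (hint : IntegrableOn (fun y ↦ ‖y‖) U μ)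
    (hmean : ∫ y in U, ‖y‖ ∂μ ≤ ρ * μ.real U) :
    μ.real U ≤
      μ.real (ball 0 1) * (((finrank ℝ E : ℝ) + 1) / finrank ℝ E * ρ) ^ finrank ℝ E := by
  have hd : (0 : ℝ) < finrank ℝ E := Nat.cast_pos.2 finrank_pos
  set d := finrank ℝ E
  set R := ((d : ℝ) + 1) / d * ρ with hRdef
  have hR : 0 < R := by positivity
  have hconst : IntegrableOn (fun _ ↦ R) U μ := integrableOn_const hU
  have hR_sub : R - ρ = R / (d + 1) := by
    rw [hRdef]
    field_simp
    ring
  have hle : R / (d + 1) * μ.real U ≤ R / (d + 1) * (μ.real (ball 0 1) * R ^ d) :=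
    calc R / (d + 1) * μ.real U
        ≤ μ.real U * R - ∫ y in U, ‖y‖ ∂μ := by rw [← hR_sub]; linarith
      _ = ∫ y in U, (R - ‖y‖) ∂μ := by
          rw [integral_sub hconst hint, setIntegral_const, smul_eq_mul]
      _ ≤ ∫ y in U, max (R - ‖y‖) 0 ∂μ :=
          setIntegral_mono (hconst.sub hint) (integrable_posPart_sub_norm μ R).integrableOn
            fun y ↦ le_max_left _ _
      _ ≤ ∫ y, max (R - ‖y‖) 0 ∂μ :=
          setIntegral_le_integral (integrable_posPart_sub_norm μ R)
            (ae_of_all _ fun y ↦ le_max_right _ _)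
      _ = R / (d + 1) * (μ.real (ball 0 1) * R ^ d) := by
          rw [integral_posPart_sub_norm μ hR.le, pow_succ]
          ring
  exact le_of_mul_le_mul_left hle (by positivity)

end Bathtub

section CenteredBox

open MeasureTheory

variable {ι : Type*} {d : ι → ℝ} {x : EuclideanSpace ℝ ι}

/-- The half-open box with side lengths `d` centred at `x`. Boxes centred at the points of a
rectangular lattice with spacings `d` are the cells of that lattice. -/
def centeredBox (d : ι → ℝ) (x : EuclideanSpace ℝ ι) : Set (EuclideanSpace ℝ ι) :=
  WithLp.ofLp ⁻¹' univ.pi fun j ↦ Ico (x j - d j / 2) (x j + d j / 2)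

/-- The rectangular lattice `∏_j d_j ℤ`, which contains the support points; it lives in Euclidean
space because `ι → ℝ` carries the sup norm. -/
def rectLattice (d : ι → ℝ) : Set (EuclideanSpace ℝ ι) :=
  {x | ∀ j, ∃ i : ℤ, x j = i * d j}

lemma disjoint_centeredBox_of_mem_rectLattice {x' : EuclideanSpace ℝ ι}
    (hx : x ∈ rectLattice d) (hx' : x' ∈ rectLattice d) (hne : x ≠ x') :
    Disjoint (centeredBox d x) (centeredBox d x') := by
  refine disjoint_left.2 fun y hy hy' ↦ hne (PiLp.ext fun j ↦ ?_)
  obtain ⟨i, hi⟩ := hx j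
  obtain ⟨i', hi'⟩ := hx' j
  obtain ⟨hlow, hhigh⟩ := hy j (mem_univ j)
  obtain ⟨hlow', hhigh'⟩ := hy' j (mem_univ j)
  have hd : 0 < d j := by linarith
  have hdist : |(i - i' : ℝ)| * d j < 1 * d j := by
    rw [← abs_of_pos hd, ← abs_mul, abs_of_pos hd, sub_mul, ← hi, ← hi', abs_sub_lt_iff]
    constructor <;> linarith
  have hlt : |i - i'| < 1 := by exact_mod_cast lt_of_mul_lt_mul_right hdist hd.le
  rw [hi, hi', sub_eq_zero.1 (Int.abs_lt_one_iff.1 hlt)]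

lemma measurableSet_centeredBox [Countable ι] : MeasurableSet (centeredBox d x) :=
  (WithLp.measurable_ofLp 2 _) (MeasurableSet.univ_pi fun _ ↦ measurableSet_Ico)

variable [Fintype ι]

lemma volume_centeredBox : volume (centeredBox d x) = ∏ j, ENNReal.ofReal (d j) := by
  rw [centeredBox, (PiLp.volume_preserving_ofLp ι).measure_preimage
    (MeasurableSet.univ_pi fun _ ↦ measurableSet_Ico).nullMeasurableSet, Real.volume_pi_Ico]
  simp only [add_sub_sub_cancel, add_halves]

lemma volume_centeredBox_ne_top : volume (centeredBox d x) ≠ ⊤ :=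
  volume_centeredBox (d := d) ▸ ENNReal.prod_ne_top fun _ _ ↦ ENNReal.ofReal_ne_top

lemma volume_real_centeredBox (hd : ∀ j, 0 ≤ d j) :
    volume.real (centeredBox d x) = ∏ j, d j := by
  simp only [measureReal_def, volume_centeredBox, ENNReal.toReal_prod,
    ENNReal.toReal_ofReal (hd _)]

lemma integrableOn_centeredBox {f : EuclideanSpace ℝ ι → ℝ} (hf : Continuous f) :
    IntegrableOn f (centeredBox d x) := by
  have hcompact : IsCompact (WithLp.ofLp ⁻¹' univ.pi fun j ↦
      Icc (x j - d j / 2) (x j + d j / 2) : Set (EuclideanSpace ℝ ι)) :=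
    (PiLp.homeomorph 2 _).isCompact_preimage.2 (isCompact_univ_pi fun _ ↦ isCompact_Icc)
  exact (hf.continuousOn.integrableOn_compact hcompact).mono_set
    (preimage_mono (pi_mono fun _ _ ↦ Ico_subset_Icc_self))

lemma setIntegral_Ico_abs_sub_pow {r : ℝ} (hr : 0 ≤ r) (a : ℝ) (m : ℕ) :
    ∫ t in Ico (a - r) (a + r), |t - a| ^ m = 2 * (r ^ (m + 1) / (m + 1)) := by
  have hhalf : ∀ b, |b - a| = r → ∫ t in uIoc a b, |t - a| ^ m = r ^ (m + 1) / (m + 1) :=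
    fun b hb ↦ by rw [integral_pow_abs_sub_uIoc, hb]
  have hint : ∀ b c, IntervalIntegrable (fun t ↦ |t - a| ^ m) volume b c :=
    fun b c ↦ Continuous.intervalIntegrable (by fun_prop) b c
  have hleft := hhalf (a - r) (by rw [sub_sub_cancel_left, abs_neg, abs_of_nonneg hr])
  have hright := hhalf (a + r) (by rw [add_sub_cancel_left, abs_of_nonneg hr])
  rw [uIoc_comm, uIoc_of_le (by linarith), ← intervalIntegral.integral_of_le (by linarith)]
    at hleft
  rw [uIoc_of_le (by linarith), ← intervalIntegral.integral_of_le (by linarith)] at hright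
  rw [integral_Ico_eq_integral_Ioc, ← intervalIntegral.integral_of_le (by linarith),
    ← intervalIntegral.integral_add_adjacent_intervals (hint _ a) (hint a _), hleft, hright,
    two_mul]

lemma setIntegral_centeredBox_apply [DecidableEq ι] (hd : ∀ j, 0 ≤ d j) (j : ι) {f : ℝ → ℝ}
    (hf : Continuous f) :
    ∫ y in centeredBox d x, f (y j) =
      (∏ i ∈ Finset.univ.erase j, d i) *
        ∫ t in Ico (x j - d j / 2) (x j + d j / 2), f t := by
  have hmap := integral_map (μ := Measure.pi fun i ↦
    volume.restrict (Ico (x i - d i / 2) (x i + d i / 2)))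
    (measurable_pi_apply j).aemeasurable hf.aestronglyMeasurable
  rw [centeredBox, (PiLp.volume_preserving_ofLp ι).setIntegral_preimage_emb
    (MeasurableEquiv.toLp 2 _).symm.measurableEmbedding (fun y ↦ f (y j)), volume_pi,
    Measure.restrict_pi_pi, ← hmap, Measure.pi_map_eval, integral_smul_measure]
  simp only [Measure.restrict_apply_univ, Real.volume_Ico, add_sub_sub_cancel, add_halves,
    ENNReal.toReal_prod, ENNReal.toReal_ofReal (hd _), smul_eq_mul]

lemma setIntegral_centeredBox_abs_sub_pow (hd : ∀ j, 0 ≤ d j) (j : ι) (m : ℕ) :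
    ∫ y in centeredBox d x, |y j - x j| ^ m = (∏ i, d i) * ((d j / 2) ^ m / (m + 1)) := by
  classical
  rw [setIntegral_centeredBox_apply hd j (f := fun t ↦ |t - x j| ^ m) (by fun_prop),
    setIntegral_Ico_abs_sub_pow (div_nonneg (hd j) zero_le_two),
    ← Finset.mul_prod_erase _ _ (Finset.mem_univ j)]
  ring

/-- An upper bound for the mean distance of a uniform point of `centeredBox d x` from `x`: the
first term bounds the mean `ℓ¹` distance, the second the root mean square distance. -/
def boxMeanDistBound (d : ι → ℝ) : ℝ :=
  min ((∑ j, d j) / 4) √((∑ j, d j ^ 2) / 12)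

lemma boxMeanDistBound_nonneg (hd : ∀ j, 0 ≤ d j) : 0 ≤ boxMeanDistBound d :=
  le_min (div_nonneg (Finset.sum_nonneg fun j _ ↦ hd j) (by norm_num)) (Real.sqrt_nonneg _)

lemma boxMeanDistBound_pos [Nonempty ι] (hd : ∀ j, 0 < d j) : 0 < boxMeanDistBound d := by
  have hsum : 0 < ∑ j, d j := Finset.sum_pos (fun j _ ↦ hd j) Finset.univ_nonempty
  have hsq : 0 < ∑ j, d j ^ 2 :=
    Finset.sum_pos (fun j _ ↦ pow_pos (hd j) 2) Finset.univ_nonempty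
  exact lt_min (by positivity) (by positivity)

lemma boxMeanDistBound_le_of_le_one (hd : ∀ j, 0 ≤ d j) (hd1 : ∀ j, d j ≤ 1) :
    boxMeanDistBound d ≤ min ((Fintype.card ι : ℝ) / 4) √((Fintype.card ι : ℝ) / 12) := by
  have hsum : ∑ j, d j ≤ Fintype.card ι := by
    simpa using Finset.sum_le_card_nsmul Finset.univ d 1 fun j _ ↦ hd1 j
  have hsq : ∑ j, d j ^ 2 ≤ Fintype.card ι := by
    simpa using Finset.sum_le_card_nsmul Finset.univ (fun j ↦ d j ^ 2) 1 fun j _ ↦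
      pow_le_one₀ (hd j) (hd1 j)
  unfold boxMeanDistBound
  gcongr

lemma setIntegral_centeredBox_norm_sub_le_sum (hd : ∀ j, 0 ≤ d j) :
    ∫ y in centeredBox d x, ‖y - x‖ ≤ (∏ j, d j) * ((∑ j, d j) / 4) := by
  have hnorm : ∀ y : EuclideanSpace ℝ ι, ‖y - x‖ ≤ ∑ j, |y j - x j| ^ 1 := fun y ↦ by
    simpa using euclideanNorm_le_rpow_sum one_pos one_le_two (y - x)
  calc ∫ y in centeredBox d x, ‖y - x‖
      ≤ ∫ y in centeredBox d x, ∑ j, |y j - x j| ^ 1 :=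
        setIntegral_mono (integrableOn_centeredBox (by fun_prop))
          (integrableOn_centeredBox (by fun_prop)) hnorm
    _ = ∑ j, (∏ i, d i) * ((d j / 2) ^ 1 / ((1 : ℕ) + 1)) := by
        rw [integral_finsetSum _ fun j _ ↦ integrableOn_centeredBox (by fun_prop)]
        exact Finset.sum_congr rfl fun j _ ↦ setIntegral_centeredBox_abs_sub_pow hd j 1
    _ = (∏ j, d j) * ((∑ j, d j) / 4) := by
        rw [← Finset.mul_sum, Finset.sum_div]
        congr! 2
        push_cast
        ring

lemma setIntegral_centeredBox_norm_sub_sq (hd : ∀ j, 0 ≤ d j) :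
    ∫ y in centeredBox d x, ‖y - x‖ ^ 2 = (∏ j, d j) * ((∑ j, d j ^ 2) / 12) := by
  simp only [EuclideanSpace.norm_sq_eq, PiLp.sub_apply, Real.norm_eq_abs]
  rw [integral_finsetSum _ fun j _ ↦ integrableOn_centeredBox (by fun_prop), Finset.sum_div,
    Finset.mul_sum]
  refine Finset.sum_congr rfl fun j _ ↦ ?_
  rw [setIntegral_centeredBox_abs_sub_pow hd]
  push_cast
  ring

lemma setIntegral_centeredBox_norm_sub_le_sqrt (hd : ∀ j, 0 < d j) :
    ∫ y in centeredBox d x, ‖y - x‖ ≤ (∏ j, d j) * √((∑ j, d j ^ 2) / 12) := by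
  have hD : 0 < ∏ j, d j := Finset.prod_pos fun j _ ↦ hd j
  have hvol := volume_real_centeredBox (x := x) fun j ↦ (hd j).le
  have hvol0 : volume (centeredBox d x) ≠ 0 := fun h0 ↦
    hD.ne' (by rw [← hvol, measureReal_def, h0, ENNReal.toReal_zero])
  have hjensen := (even_two.convexOn_pow (𝕜 := ℝ)).map_set_average_le
    (f := fun y ↦ ‖y - x‖) (continuous_pow 2).continuousOn isClosed_univ hvol0
    volume_centeredBox_ne_top (ae_of_all _ fun _ ↦ mem_univ _)
    (integrableOn_centeredBox (by fun_prop)) (integrableOn_centeredBox (by fun_prop))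
  rw [setAverage_eq, setAverage_eq, setIntegral_centeredBox_norm_sub_sq fun j ↦ (hd j).le, hvol,
    smul_eq_mul, smul_eq_mul, inv_mul_cancel_left₀ hD.ne'] at hjensen
  exact (inv_mul_le_iff₀ hD).1 (Real.le_sqrt_of_sq_le hjensen)

lemma setIntegral_centeredBox_norm_sub_le (hd : ∀ j, 0 < d j) :
    ∫ y in centeredBox d x, ‖y - x‖ ≤ (∏ j, d j) * boxMeanDistBound d := by
  rw [boxMeanDistBound, mul_min_of_nonneg _ _ (Finset.prod_nonneg fun j _ ↦ (hd j).le)]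
  exact le_min (setIntegral_centeredBox_norm_sub_le_sum fun j ↦ (hd j).le)
    (setIntegral_centeredBox_norm_sub_le_sqrt hd)

lemma setIntegral_centeredBox_norm_le (hd : ∀ j, 0 < d j) :
    ∫ y in centeredBox d x, ‖y‖ ≤ (∏ j, d j) * (‖x‖ + boxMeanDistBound d) :=
  calc ∫ y in centeredBox d x, ‖y‖
      ≤ ∫ y in centeredBox d x, (‖x‖ + ‖y - x‖) :=
        setIntegral_mono (integrableOn_centeredBox (by fun_prop))
          (integrableOn_centeredBox (by fun_prop)) fun y ↦ norm_le_norm_add_norm_sub' y x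
    _ = (∏ j, d j) * ‖x‖ + ∫ y in centeredBox d x, ‖y - x‖ := by
        rw [integral_add (integrableOn_centeredBox continuous_const)
          (integrableOn_centeredBox (by fun_prop)), setIntegral_const,
          volume_real_centeredBox fun j ↦ (hd j).le, smul_eq_mul]
    _ ≤ (∏ j, d j) * (‖x‖ + boxMeanDistBound d) := by
        rw [mul_add]
        gcongr
        exact setIntegral_centeredBox_norm_sub_le hd

end CenteredBox

section LatticePacking

open MeasureTheory Metric

variable {ι : Type*} [Fintype ι] [Nonempty ι] {d : ι → ℝ} {S : Finset (EuclideanSpace ℝ ι)}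

lemma card_mul_prod_le_of_sum_norm_le (hd : ∀ j, 0 < d j) (hS : ↑S ⊆ rectLattice d) {ρ : ℝ}
    (hρ : 0 ≤ ρ) (hsum : ∑ x ∈ S, ‖x‖ ≤ ρ * S.card) :
    S.card * ∏ j, d j ≤ volume.real (ball (0 : EuclideanSpace ℝ ι) 1) *
      (((Fintype.card ι : ℝ) + 1) / Fintype.card ι * (ρ + boxMeanDistBound d)) ^
        Fintype.card ι := by
  have hD : 0 < ∏ j, d j := Finset.prod_pos fun j _ ↦ hd j
  have hdisj : (S : Set (EuclideanSpace ℝ ι)).PairwiseDisjoint (centeredBox d) :=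
    fun x hx x' hx' hne ↦ disjoint_centeredBox_of_mem_rectLattice (hS hx) (hS hx') hne
  set U := ⋃ x ∈ S, centeredBox d x
  have hUvol : volume.real U = S.card * ∏ j, d j := by
    rw [measureReal_biUnion_finset hdisj (fun _ _ ↦ measurableSet_centeredBox)
      fun _ _ ↦ volume_centeredBox_ne_top]
    simp only [volume_real_centeredBox fun j ↦ (hd j).le, Finset.sum_const, nsmul_eq_mul]
  have hUfin : volume U ≠ ⊤ := (measure_biUnion_lt_top S.finite_toSet fun _ _ ↦
    volume_centeredBox_ne_top.lt_top).ne
  have hUint : IntegrableOn (fun y ↦ ‖y‖) U :=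
    integrableOn_finset_iUnion.2 fun _ _ ↦ integrableOn_centeredBox continuous_norm
  have hUmean : ∫ y in U, ‖y‖ ≤ (ρ + boxMeanDistBound d) * volume.real U :=
    calc ∫ y in U, ‖y‖ = ∑ x ∈ S, ∫ y in centeredBox d x, ‖y‖ :=
          integral_biUnion_finset S (fun _ _ ↦ measurableSet_centeredBox) hdisj
            fun _ _ ↦ integrableOn_centeredBox continuous_norm
      _ ≤ ∑ x ∈ S, (∏ j, d j) * (‖x‖ + boxMeanDistBound d) :=
          Finset.sum_le_sum fun _ _ ↦ setIntegral_centeredBox_norm_le hd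
      _ = (∏ j, d j) * (∑ x ∈ S, ‖x‖ + S.card * boxMeanDistBound d) := by
          rw [← Finset.mul_sum, Finset.sum_add_distrib, Finset.sum_const, nsmul_eq_mul]
      _ ≤ (∏ j, d j) * (ρ * S.card + S.card * boxMeanDistBound d) := by gcongr
      _ = (ρ + boxMeanDistBound d) * volume.real U := by
          rw [hUvol]
          ring
  have hbathtub := measureReal_le_of_setIntegral_norm_le volume
    (add_pos_of_nonneg_of_pos hρ (boxMeanDistBound_pos hd)) hUfin hUint hUmean
  rwa [hUvol, finrank_euclideanSpace] at hbathtub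

end LatticePacking

section LatticeSupport

open MeasureTheory Metric

lemma rpow_add_div_le_of_mul_le_pow {N t D V K p : ℝ} {k : ℕ} (hN : 0 < N) (ht : 0 < t)
    (hD : 0 < D) (hp : 0 < p) (h : N * D ≤ V * ((t / N) ^ (1 / p) * K) ^ k) :
    N ^ ((k + p) / p) ≤ V * K ^ k * (t ^ (k / p) / D) := by
  have hpow : ((t / N) ^ (1 / p)) ^ k = t ^ (k / p) / N ^ (k / p) := by
    rw [← Real.rpow_mul_natCast (by positivity), one_div_mul_eq_div, Real.div_rpow ht.le hN.le]
  rw [mul_pow, hpow] at h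
  calc N ^ ((k + p) / p) = N * D * N ^ (k / p) / D := by
        rw [add_div, div_self hp.ne', Real.rpow_add_one hN.ne']
        field_simp
    _ ≤ V * (t ^ (k / p) / N ^ (k / p) * K ^ k) * N ^ (k / p) / D := by gcongr
    _ = V * K ^ k * (t ^ (k / p) / D) := by field_simp

lemma le_rpow_mul_of_mul_le_pow {N t D V K p : ℝ} {k : ℕ} (hN : 0 < N) (ht : 0 < t)
    (hD : 0 < D) (hV : 0 ≤ V) (hK : 0 ≤ K) (hp : 0 < p)
    (h : N * D ≤ V * ((t / N) ^ (1 / p) * K) ^ k) :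
    N ≤ V ^ (p / (k + p)) * K ^ (k * p / (k + p)) * (t ^ (k / p) / D) ^ (p / (k + p)) := by
  have hexp : ((k : ℝ) + p) / p * (p / (k + p)) = 1 := by field_simp
  calc N = (N ^ ((k + p) / p)) ^ (p / (k + p)) := by
        rw [← Real.rpow_mul hN.le, hexp, Real.rpow_one]
    _ ≤ (V * K ^ k * (t ^ (k / p) / D)) ^ (p / (k + p)) := by
        gcongr
        exact rpow_add_div_le_of_mul_le_pow hN ht hD hp h
    _ = _ := by
        rw [Real.mul_rpow (by positivity) (by positivity), Real.mul_rpow hV (by positivity),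
          ← Real.rpow_natCast_mul hK, mul_div_assoc]

variable {ι : Type*} [Fintype ι] {p c : ℝ} {d : ι → ℝ} {S : Finset (EuclideanSpace ℝ ι)}

/-- The analogue of `σ(k, p, c)` for a lattice with arbitrary spacings `d`: the mean distance
bound `min {k/4, √(k/12)}` of the unit cube is replaced by that of the lattice cell. -/
def latticeSigma (p c : ℝ) (d : ι → ℝ) : ℝ :=
  volume.real (ball (0 : EuclideanSpace ℝ ι) 1) ^ (p / (Fintype.card ι + p)) *
    (((Fintype.card ι : ℝ) + 1) / Fintype.card ι *
        (max 1 ((Fintype.card ι : ℝ) ^ ((1 : ℝ) / 2 - 1 / p)) * c ^ (1 / p) +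
          boxMeanDistBound d)) ^
      ((Fintype.card ι : ℝ) * p / (Fintype.card ι + p))

lemma sum_euclideanNorm_le_of_sum_rpow_le (hp : 1 ≤ p) (hc : 0 ≤ c) {t : ℝ} (ht : 0 ≤ t)
    (hmom : ∑ x ∈ S, ∑ j, |x j| ^ p ≤ t * c) :
    ∑ x ∈ S, ‖x‖ ≤ (t / S.card) ^ (1 / p) *
      (max 1 ((Fintype.card ι : ℝ) ^ ((1 : ℝ) / 2 - 1 / p)) * c ^ (1 / p)) * S.card := by
  rcases S.eq_empty_or_nonempty with rfl | hS
  · simp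
  have hN : 0 < (S.card : ℝ) := by exact_mod_cast hS.card_pos
  refine (sum_euclideanNorm_le hp S).trans ?_
  calc max 1 ((Fintype.card ι : ℝ) ^ ((1 : ℝ) / 2 - 1 / p)) *
        ((S.card : ℝ) ^ (1 - 1 / p) * (∑ x ∈ S, ∑ j, |x j| ^ p) ^ (1 / p))
      ≤ max 1 ((Fintype.card ι : ℝ) ^ ((1 : ℝ) / 2 - 1 / p)) *
        ((S.card : ℝ) ^ (1 - 1 / p) * (t * c) ^ (1 / p)) := by gcongr
    _ = _ := by
        rw [Real.rpow_sub hN, Real.rpow_one, Real.mul_rpow ht hc, Real.div_rpow ht hN.le]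
        ring

theorem card_le_latticeSigma_mul [Nonempty ι] (hp : 1 ≤ p) (hc : 0 ≤ c) (hd : ∀ j, 0 < d j)
    (hS : ↑S ⊆ rectLattice d) {t : ℝ} (hcard : S.card ≤ t)
    (hmom : ∑ x ∈ S, ∑ j, |x j| ^ p ≤ t * c) :
    S.card ≤ latticeSigma p c d *
      (t ^ (Fintype.card ι / p) / ∏ j, d j) ^ (p / (Fintype.card ι + p)) := by
  set M := max 1 ((Fintype.card ι : ℝ) ^ ((1 : ℝ) / 2 - 1 / p))
  set m := boxMeanDistBound d
  set a := ((Fintype.card ι : ℝ) + 1) / Fintype.card ι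
  set r := (t / S.card) ^ (1 / p)
  set V := volume.real (ball (0 : EuclideanSpace ℝ ι) 1)
  have hp0 : 0 < p := one_pos.trans_le hp
  have hD : 0 < ∏ j, d j := Finset.prod_pos fun j _ ↦ hd j
  have ht : 0 ≤ t := (Nat.cast_nonneg _).trans hcard
  have hm : 0 ≤ m := (boxMeanDistBound_pos hd).le
  have hK : 0 ≤ a * (M * c ^ (1 / p) + m) := by positivity
  rcases S.eq_empty_or_nonempty with rfl | hne
  · rw [Finset.card_empty, Nat.cast_zero, latticeSigma]
    positivity
  have hN : 0 < (S.card : ℝ) := by exact_mod_cast hne.card_pos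
  have hr : 1 ≤ r := Real.one_le_rpow ((one_le_div hN).2 hcard) (by positivity)
  have hV0 : 0 ≤ V := measureReal_nonneg
  refine le_rpow_mul_of_mul_le_pow hN (hN.trans_le hcard) hD hV0 hK hp0 ?_
  calc S.card * ∏ j, d j
      ≤ V * (a * (r * (M * c ^ (1 / p)) + m)) ^ Fintype.card ι :=
        card_mul_prod_le_of_sum_norm_le hd hS (by positivity)
          (sum_euclideanNorm_le_of_sum_rpow_le hp hc ht hmom)
    _ ≤ V * (a * (r * (M * c ^ (1 / p)) + r * m)) ^ Fintype.card ι := by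
        gcongr
        exact le_mul_of_one_le_left hm hr
    _ = V * (r * (a * (M * c ^ (1 / p) + m))) ^ Fintype.card ι := by
        rw [← mul_add, mul_left_comm]

end LatticeSupport

namespace IsTypeVec

variable {k n : ℕ} {Δ : Fin k → ℝ} {P : (Fin k → ℝ) → ℝ}

lemma nonneg (hP : IsTypeVec k n Δ P) (x : Fin k → ℝ) : 0 ≤ P x := hP.1 x

lemma finite_support (hP : IsTypeVec k n Δ P) : (Function.support P).Finite := hP.2.2.2.1

lemma finsum_eq_one (hP : IsTypeVec k n Δ P) : ∑ᶠ x, P x = 1 := hP.2.2.2.2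

lemma toLp_mem_rectLattice (hP : IsTypeVec k n Δ P) {x : Fin k → ℝ} (hx : P x ≠ 0) :
    WithLp.toLp 2 x ∈ rectLattice Δ := hP.2.1 x hx

lemma denominator_pos (hP : IsTypeVec k n Δ P) : 0 < n := by
  refine Nat.pos_of_ne_zero fun hn ↦ one_ne_zero (α := ℝ) ?_
  have hzero : ∀ x, P x = 0 := fun x ↦ by
    obtain ⟨m, hm⟩ := hP.2.2.1 x
    rw [hm, hn, Nat.cast_zero, div_zero]
  rw [← hP.finsum_eq_one, finsum_congr hzero, finsum_zero]

lemma one_le_mul (hP : IsTypeVec k n Δ P) {x : Fin k → ℝ} (hx : P x ≠ 0) : 1 ≤ n * P x := by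
  obtain ⟨m, hm⟩ := hP.2.2.1 x
  have hn : (n : ℝ) ≠ 0 := Nat.cast_ne_zero.2 hP.denominator_pos.ne'
  have hm0 : m ≠ 0 := fun h0 ↦ hx (by rw [hm, h0, Nat.cast_zero, zero_div])
  rw [hm, mul_div_cancel₀ _ hn]
  exact_mod_cast Nat.one_le_iff_ne_zero.2 hm0

lemma sum_support_le (hP : IsTypeVec k n Δ P) {g : (Fin k → ℝ) → ℝ} (hg : ∀ x, 0 ≤ g x) :
    ∑ x ∈ hP.finite_support.toFinset, g x ≤ n * ∑ᶠ x, P x * g x := by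
  have hsub : (Function.support fun x ↦ P x * g x) ⊆ ↑hP.finite_support.toFinset := by
    rw [Set.Finite.coe_toFinset]
    exact Function.support_mul_subset_left P g
  rw [finsum_eq_sum_of_support_subset _ hsub, Finset.mul_sum]
  refine Finset.sum_le_sum fun x hx ↦ ?_
  rw [← mul_assoc]
  exact le_mul_of_one_le_left (hg x) (hP.one_le_mul (hP.finite_support.mem_toFinset.1 hx))

lemma finsum_mul_nonneg (hP : IsTypeVec k n Δ P) {g : (Fin k → ℝ) → ℝ} (hg : ∀ x, 0 ≤ g x) :
    0 ≤ ∑ᶠ x, P x * g x :=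
  finsum_nonneg fun x ↦ mul_nonneg (hP.nonneg x) (hg x)

end IsTypeVec

theorem support_of_joint_type_general {k n : ℕ} (hk : 1 ≤ k) {p c : ℝ} (hp : 1 ≤ p)
    {Δ : Fin k → ℝ} (hΔ : ∀ j, 0 < Δ j) {P : (Fin k → ℝ) → ℝ} (hP : IsTypeVec k n Δ P)
    (hc : (∑ᶠ x, P x * ∑ j, |x j| ^ p) ≤ c) :
    ((Function.support P).ncard : ℝ) ≤
      latticeSigma p c Δ * ((n : ℝ) ^ (k / p) / ∏ j, Δ j) ^ (p / (k + p)) := by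
  have : Nonempty (Fin k) := ⟨⟨0, hk⟩⟩
  set S := hP.finite_support.toFinset.map (WithLp.equiv 2 (Fin k → ℝ)).symm.toEmbedding
  have hncard : (Function.support P).ncard = S.card := by
    rw [Finset.card_map, Set.ncard_eq_toFinset_card _ hP.finite_support]
  have hlattice : ↑S ⊆ rectLattice Δ := by
    intro y hy
    obtain ⟨x, hx, rfl⟩ := Finset.mem_map.1 hy
    exact hP.toLp_mem_rectLattice (hP.finite_support.mem_toFinset.1 hx)
  have hcard : (S.card : ℝ) ≤ n := by
    simpa [S, hP.finsum_eq_one] using hP.sum_support_le (g := fun _ ↦ 1) fun _ ↦ zero_le_one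
  have hmom_nonneg : ∀ x : Fin k → ℝ, 0 ≤ ∑ j, |x j| ^ p := fun x ↦ by positivity
  have hc0 : 0 ≤ c := (hP.finsum_mul_nonneg hmom_nonneg).trans hc
  have hmom : ∑ y ∈ S, ∑ j, |y j| ^ p ≤ n * c := by
    rw [Finset.sum_map]
    exact (hP.sum_support_le hmom_nonneg).trans (by gcongr)
  simpa [hncard] using card_le_latticeSigma_mul hp hc0 hΔ hlattice hcard hmom

lemma latticeSigma_le_sigmaConst {k : ℕ} {p c : ℝ} (hp : 0 ≤ p) (hc : 0 ≤ c) {Δ : Fin k → ℝ}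
    (hΔ : ∀ j, 0 ≤ Δ j) (hΔ1 : ∀ j, Δ j ≤ 1) : latticeSigma p c Δ ≤ sigmaConst k p c := by
  have hbound := boxMeanDistBound_le_of_le_one hΔ hΔ1
  have hnonneg := boxMeanDistBound_nonneg hΔ
  simp only [latticeSigma, sigmaConst, unitBallVol, MeasureTheory.measureReal_def,
    Fintype.card_fin] at hbound ⊢
  gcongr

lemma rpow_div_prod_rpow_neg {ι : Type*} [Fintype ι] {t k p : ℝ} (ht : 0 < t) (hp : p ≠ 0)
    (α : ι → ℝ) :
    (t ^ (k / p) / ∏ j, t ^ (-(α j))) ^ (p / (k + p)) =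
      t ^ ((k + p * ∑ j, α j) / (k + p)) := by
  rw [← Real.rpow_sum_of_pos ht, ← Real.rpow_sub ht, ← Real.rpow_mul ht.le,
    Finset.sum_neg_distrib, sub_neg_eq_add]
  congr 1
  field_simp

lemma latticeSigma_rpow_neg_mul_le {k : ℕ} {t p c : ℝ} (ht : 1 ≤ t) (hp : 0 < p) (hc : 0 ≤ c)
    {α : Fin k → ℝ} (hα : ∀ j, 0 ≤ α j) :
    latticeSigma p c (fun j ↦ t ^ (-(α j))) *
        (t ^ (k / p) / ∏ j, t ^ (-(α j))) ^ (p / (k + p)) ≤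
      sigmaConst k p c * t ^ ((k + p * ∑ j, α j) / (k + p)) := by
  have ht0 : 0 < t := one_pos.trans_le ht
  rw [rpow_div_prod_rpow_neg ht0 hp.ne']
  gcongr
  exact latticeSigma_le_sigmaConst hp.le hc (fun j ↦ (Real.rpow_pos_of_pos ht0 _).le)
    fun j ↦ Real.rpow_le_one_of_one_le_of_nonpos ht (neg_nonpos.2 (hα j))

/-- Lemma 15 (Support of a joint type): the support of a joint type of `k` symbols with
the generalized moment constraint `E[‖X‖_p^p] ≤ c` satisfies
`|S(P_X)| ≤ σ(k,p,c) n^{(k + p ∑ α_j)/(k+p)}`. -/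
theorem support_of_joint_type
    (k n : ℕ) (hk : 1 ≤ k) (p c : ℝ) (hp : 1 ≤ p) (α : Fin k → ℝ) (hα : ∀ j, 0 ≤ α j)
    (P : (Fin k → ℝ) → ℝ) (hP : IsTypeVec k n (fun j => (n : ℝ) ^ (-(α j))) P)
    (hc : (∑ᶠ x, P x * ∑ j, |x j| ^ p) ≤ c) :
    ((Function.support P).ncard : ℝ) ≤
      sigmaConst k p c * (n : ℝ) ^ (((k : ℝ) + p * ∑ j, α j) / ((k : ℝ) + p)) := by
  have hn : (1 : ℝ) ≤ n := Nat.one_le_cast.2 hP.denominator_pos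
  have hc0 : 0 ≤ c := (hP.finsum_mul_nonneg fun x ↦ by positivity).trans hc
  exact (support_of_joint_type_general hk hp (fun j ↦ by positivity) hP hc).trans
    (latticeSigma_rpow_neg_mul_le hn (one_pos.trans_le hp) hc0 hα)
end
end
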